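/- Let 𝕄 = ⟨M, 𝒞⟩ be a countable transitive model of GB⁻. If ℙ is a notion of class forcing for 𝕄 that is approachable by projections, then ℙ satisfies the forcing theorem over 𝕄. -/

import Mathlib

noncomputable section

namespace CF

attribute [local instance] Classical.propDecidable

/-! ### First-order formulas of the language of set theory -/

/-- First-order `∈`-formulas with variables indexed by `ℕ`. -/
inductive EFormula : Type
  | mem : ℕ → ℕ → EFormula
  | eq : ℕ → ℕ → EFormula
  | not : EFormula → EFormula
  | or : EFormula → EFormula → EFormula
  | ex : ℕ → EFormula → EFormula

/-- Satisfaction of an `∈`-formula in the structure `⟨D, ∈⟩` under assignment `v`. -/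
def EFormula.Sat (D : Set ZFSet) (v : ℕ → ZFSet) : EFormula → Prop
  | .mem i j => v i ∈ v j
  | .eq i j => v i = v j
  | .not φ => ¬ EFormula.Sat D v φ
  | .or φ ψ => EFormula.Sat D v φ ∨ EFormula.Sat D v ψ
  | .ex i φ => ∃ x ∈ D, EFormula.Sat D (Function.update v i x) φ

/-- All variables occurring in the formula are `< m`. -/
def EFormula.VarsLt (m : ℕ) : EFormula → Prop
  | .mem i j => i < m ∧ j < m
  | .eq i j => i < m ∧ j < m
  | .not φ => EFormula.VarsLt m φ
  | .or φ ψ => EFormula.VarsLt m φ ∧ EFormula.VarsLt m ψ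
  | .ex i φ => i < m ∧ EFormula.VarsLt m φ

/-- First-order formulas of the two-sorted language of `GB⁻`: set variables indexed by `ℕ`,
class parameters indexed by `ℕ`, and only set quantifiers. -/
inductive GBFormula : Type
  | mem : ℕ → ℕ → GBFormula
  | eq : ℕ → ℕ → GBFormula
  | cls : ℕ → ℕ → GBFormula    -- `vᵢ ∈ C_j`
  | not : GBFormula → GBFormula
  | or : GBFormula → GBFormula → GBFormula
  | ex : ℕ → GBFormula → GBFormula

/-- Satisfaction of a `GBFormula` with set quantifiers ranging over `Mset`,
class parameters `Cs` and set assignment `v`. -/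
def GBFormula.Sat (Mset : Set ZFSet) (Cs : ℕ → Set ZFSet) (v : ℕ → ZFSet) : GBFormula → Prop
  | .mem i j => v i ∈ v j
  | .eq i j => v i = v j
  | .cls i j => v i ∈ Cs j
  | .not φ => ¬ GBFormula.Sat Mset Cs v φ
  | .or φ ψ => GBFormula.Sat Mset Cs v φ ∨ GBFormula.Sat Mset Cs v ψ
  | .ex i φ => ∃ x ∈ Mset, GBFormula.Sat Mset Cs (Function.update v i x) φ

/-! ### Countable transitive models of GB⁻ -/

/-- A countable transitive second-order model `𝕄 = ⟨M, 𝒞⟩` of `GB⁻`: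
`M` is transitive and countable, classes are subsets of `M`, sets are classes, and the axioms
of `GB⁻` hold (extensionality and foundation are automatic for `ZFSet`; the set axioms of `ZF⁻`
with separation and collection allowing class parameters, together with first-order class
comprehension, are listed). -/
structure GBModel.{u} where
  M : Set ZFSet.{u}
  Cls : Set (Set ZFSet)
  countable_M : M.Countable
  countable_Cls : Cls.Countable
  transitive : ∀ x ∈ M, ∀ y : ZFSet, y ∈ x → y ∈ M
  sets_are_classes : ∀ x ∈ M, x.toSet ∈ Cls
  classes_sub : ∀ C ∈ Cls, C ⊆ M
  empty_mem : (∅ : ZFSet) ∈ M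
  pair_mem : ∀ x ∈ M, ∀ y ∈ M, ({x, y} : ZFSet) ∈ M
  sUnion_mem : ∀ x ∈ M, (ZFSet.sUnion x : ZFSet) ∈ M
  omega_mem : ZFSet.omega ∈ M
  comprehension : ∀ (φ : GBFormula) (v : ℕ → ZFSet) (Cs : ℕ → Set ZFSet),
    (∀ n, v n ∈ M) → (∀ n, Cs n ∈ Cls) →
    {x : ZFSet | x ∈ M ∧ GBFormula.Sat M Cs (Function.update v 0 x) φ} ∈ Cls
  separation : ∀ C ∈ Cls, ∀ a ∈ M, ∃ b ∈ M, ∀ x : ZFSet, x ∈ b ↔ x ∈ a ∧ x ∈ C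
  collection : ∀ C ∈ Cls, ∀ a ∈ M,
    (∀ x : ZFSet, x ∈ a → ∃ y ∈ M, x.pair y ∈ C) →
    ∃ b ∈ M, ∀ x : ZFSet, x ∈ a → ∃ y : ZFSet, y ∈ b ∧ x.pair y ∈ C

/-- A notion of class forcing `ℙ = ⟨P, ≤_ℙ⟩` for `𝕄`: a partial order (with maximal element
`𝟙_ℙ`) whose domain and order relation are classes of `𝕄`. -/
structure ClassForcing (𝕄 : GBModel) where
  P : Set ZFSet
  le : ZFSet → ZFSet → Prop
  one : ZFSet
  one_mem : one ∈ P
  le_one : ∀ p ∈ P, le p one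
  le_refl : ∀ p ∈ P, le p p
  le_trans : ∀ p q r : ZFSet, le p q → le q r → le p r
  P_cls : P ∈ 𝕄.Cls
  le_cls : {x : ZFSet | ∃ p ∈ P, ∃ q ∈ P, le p q ∧ x = p.pair q} ∈ 𝕄.Cls

/-! ### Names and their evaluation -/

/-- Auxiliary rank-bounded version of `IsName`. -/
def IsNameAux (S : Set ZFSet) (o : Ordinal) (σ : ZFSet) : Prop :=
  ∀ x ∈ σ.toSet, ∃ τ p : ZFSet, x = τ.pair p ∧ p ∈ S ∧
    ∃ _h : τ.rank < o, IsNameAux S τ.rank τ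
termination_by o

/-- `σ` is a `ℙ`-name (for the forcing with conditions `S`): every element of `σ` is a pair
`⟨τ, p⟩` with `τ` a `ℙ`-name and `p ∈ S`. -/
def IsName (S : Set ZFSet) (σ : ZFSet) : Prop := IsNameAux S σ.rank σ

/-- Image of a ZFSet under an arbitrary function (using choice for definability). -/
def zimage (f : ZFSet → ZFSet) (x : ZFSet) : ZFSet :=
  @ZFSet.image f (Classical.allZFSetDefinable _) x

/-- Auxiliary rank-bounded version of the evaluation `σ^G` of a name by a filter. -/
def nameEvalAux (G : Set ZFSet) (o : Ordinal) (σ : ZFSet) : ZFSet :=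
  zimage (fun τ => if h : τ.rank < o then nameEvalAux G τ.rank τ else ∅)
    (ZFSet.sep (fun τ => ∃ p, p ∈ G ∧ τ.pair p ∈ σ) (ZFSet.sUnion (ZFSet.sUnion σ)))
termination_by o
decreasing_by exact h

/-- The evaluation `σ^G = {τ^G | ∃ p ∈ G, ⟨τ, p⟩ ∈ σ}` of a name `σ` by a filter `G`. -/
def nameEval (G : Set ZFSet) (σ : ZFSet) : ZFSet := nameEvalAux G σ.rank σ

/-- Auxiliary rank-bounded version of `nameTC`. -/
def nameTCAux (o : Ordinal) (σ : ZFSet) : Set ZFSet :=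
  {x | ∃ τ p : ZFSet, τ.pair p ∈ σ ∧ (x = p ∨ ∃ _h : τ.rank < o, x ∈ nameTCAux τ.rank τ)}
termination_by o

/-- The set `tc(σ) = ⋃ {{p} ∪ tc(τ) | ⟨τ,p⟩ ∈ σ}` of conditions appearing in the transitive
closure of the name `σ`. -/
def nameTC (σ : ZFSet) : Set ZFSet := nameTCAux σ.rank σ

/-! ### Filters, genericity, generic extensions -/

/-- `G` is a filter on the partial order with domain `S` and ordering `le`. -/
def IsFilterOn (S : Set ZFSet) (le : ZFSet → ZFSet → Prop) (G : Set ZFSet) : Prop :=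
  G ⊆ S ∧ G.Nonempty ∧ (∀ p ∈ G, ∀ q ∈ S, le p q → q ∈ G) ∧
    ∀ p ∈ G, ∀ q ∈ G, ∃ r ∈ G, le r p ∧ le r q

/-- `D` is a dense subclass of the partial order `⟨S, le⟩`. -/
def DenseIn (S : Set ZFSet) (le : ZFSet → ZFSet → Prop) (D : Set ZFSet) : Prop :=
  D ⊆ S ∧ ∀ p ∈ S, ∃ q ∈ D, le q p

/-- `G` is a generic filter on `⟨S, le⟩` over `𝕄`: a filter meeting every dense subclass
of `⟨S, le⟩` lying in `𝒞`. -/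
def IsGeneric (𝕄 : GBModel) (S : Set ZFSet) (le : ZFSet → ZFSet → Prop) (G : Set ZFSet) : Prop :=
  IsFilterOn S le G ∧ ∀ D ∈ 𝕄.Cls, DenseIn S le D → (G ∩ D).Nonempty

/-- The generic extension `M[G] = {σ^G | σ ∈ M a name for the forcing with domain S}`. -/
def MGen (𝕄 : GBModel) (S : Set ZFSet) (G : Set ZFSet) : Set ZFSet :=
  {x | ∃ σ : ZFSet, σ ∈ 𝕄.M ∧ IsName S σ ∧ nameEval G σ = x}

/-! ### Compatibility, the set decision property -/

/-- `p` and `q` are compatible in `⟨S, le⟩`. -/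
def Compat (S : Set ZFSet) (le : ZFSet → ZFSet → Prop) (p q : ZFSet) : Prop :=
  ∃ r ∈ S, le r p ∧ le r q

/-- `p ≤* q` : every extension of `p` is compatible with `q`. -/
def leStar (S : Set ZFSet) (le : ZFSet → ZFSet → Prop) (p q : ZFSet) : Prop :=
  ∀ r ∈ S, le r p → Compat S le r q

/-- `p` decides the set of conditions `A`: for every `a ∈ A`, either `p ≤* a` or `p ⊥ a`. -/
def Decides (S : Set ZFSet) (le : ZFSet → ZFSet → Prop) (p A : ZFSet) : Prop :=
  ∀ a : ZFSet, a ∈ A → leStar S le p a ∨ ¬ Compat S le p a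

/-- The set decision property: every set of conditions in `M` is decided densely. -/
def SetDecisionProperty (𝕄 : GBModel) (F : ClassForcing 𝕄) : Prop :=
  ∀ p ∈ F.P, ∀ A : ZFSet, A ∈ 𝕄.M → (∀ a : ZFSet, a ∈ A → a ∈ F.P) →
    ∃ q ∈ F.P, F.le q p ∧ Decides F.P F.le q A

/-! ### The forcing theorem -/

/-- Encode a finite list of sets as a single set by iterated Kuratowski pairing. -/
def listEncode : List ZFSet → ZFSet
  | [] => ∅
  | a :: l => a.pair (listEncode l)

/-- The assignment sending variable `n < m` to `σₙ^G` (and `∅` beyond `m`). -/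
def namesAssign (G : Set ZFSet) (m : ℕ) (σs : Fin m → ZFSet) : ℕ → ZFSet :=
  fun n => if h : n < m then nameEval G (σs ⟨n, h⟩) else ∅

/-- `p ⊩_ℙ φ(σ₀, …, σ_{m-1})` : for every generic `G ∋ p`, `M[G] ⊨ φ(σ₀^G, …, σ_{m-1}^G)`. -/
def Forces (𝕄 : GBModel) (F : ClassForcing 𝕄) (φ : EFormula) (m : ℕ) (p : ZFSet)
    (σs : Fin m → ZFSet) : Prop :=
  ∀ G : Set ZFSet, IsGeneric 𝕄 F.P F.le G → p ∈ G →
    EFormula.Sat (MGen 𝕄 F.P G) (namesAssign G m σs) φ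

/-- `ℙ` satisfies the forcing theorem over `𝕄`: for every `∈`-formula `φ(v₀,…,v_{m-1})`,
the forcing relation is a class of `𝕄` (definability lemma) and everything true in a generic
extension is forced by a condition in the generic filter (truth lemma). -/
def SatisfiesForcingTheorem (𝕄 : GBModel) (F : ClassForcing 𝕄) : Prop :=
  ∀ (φ : EFormula) (m : ℕ), EFormula.VarsLt m φ →
    ({x : ZFSet | ∃ p ∈ F.P, ∃ σs : Fin m → ZFSet,
        (∀ i, σs i ∈ 𝕄.M ∧ IsName F.P (σs i)) ∧
        Forces 𝕄 F φ m p σs ∧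
        x = p.pair (listEncode (List.ofFn σs))} ∈ 𝕄.Cls) ∧
    ∀ σs : Fin m → ZFSet, (∀ i, σs i ∈ 𝕄.M ∧ IsName F.P (σs i)) →
      ∀ G : Set ZFSet, IsGeneric 𝕄 F.P F.le G →
        EFormula.Sat (MGen 𝕄 F.P G) (namesAssign G m σs) φ →
        ∃ p ∈ G, Forces 𝕄 F φ m p σs

/-! ### Complete subforcings, the set reduction property -/

/-- `A` is an antichain of the partial order `⟨S, le⟩`. -/
def IsAntichainIn (S : Set ZFSet) (le : ZFSet → ZFSet → Prop) (A : Set ZFSet) : Prop :=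
  A ⊆ S ∧ ∀ p ∈ A, ∀ q ∈ A, p ≠ q → ¬ Compat S le p q

/-- `A` is a maximal antichain of the partial order `⟨S, le⟩`. -/
def IsMaxAntichainIn (S : Set ZFSet) (le : ZFSet → ZFSet → Prop) (A : Set ZFSet) : Prop :=
  IsAntichainIn S le A ∧ ∀ p ∈ S, ∃ a ∈ A, Compat S le p a

/-- `ℚ ⊲∘ ℙ` : `Q` is a set-sized complete subforcing of `ℙ` (with the induced ordering):
`Q ∈ M`, `Q ⊆ P`, `𝟙 ∈ Q`, and every maximal antichain of `ℚ` in `M` is predense in `ℙ`. -/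
def IsCompleteSub (𝕄 : GBModel) (F : ClassForcing 𝕄) (Q : ZFSet) : Prop :=
  Q ∈ 𝕄.M ∧ Q.toSet ⊆ F.P ∧ F.one ∈ Q ∧
    ∀ A : ZFSet, A ∈ 𝕄.M → A.toSet ⊆ Q.toSet → IsMaxAntichainIn Q.toSet F.le A.toSet →
      ∀ p ∈ F.P, ∃ a : ZFSet, a ∈ A ∧ Compat F.P F.le p a

/-- `ℚ^{∥q}` : the conditions of `Q` compatible with `q` in `ℙ`. -/
def QPar (𝕄 : GBModel) (F : ClassForcing 𝕄) (Q : ZFSet) (q : ZFSet) : Set ZFSet :=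
  {r | r ∈ Q ∧ Compat F.P F.le r q}

/-- The property `(*)(A, q, ℚ)`: for every `a ∈ A`, the set of `r ∈ ℚ^{∥q}` such that either
all `s ≤ q, r` satisfy `s ≤* a`, or all `s ≤ q, r` satisfy `s ⊥ a`, is dense in `ℚ^{∥q}`. -/
def StarProp (𝕄 : GBModel) (F : ClassForcing 𝕄) (A q Q : ZFSet) : Prop :=
  ∀ a : ZFSet, a ∈ A → ∀ r₀ ∈ QPar 𝕄 F Q q, ∃ r₁ ∈ QPar 𝕄 F Q q, F.le r₁ r₀ ∧
    ((∀ s ∈ F.P, F.le s q → F.le s r₁ → leStar F.P F.le s a) ∨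
      (∀ s ∈ F.P, F.le s q → F.le s r₁ → ¬ Compat F.P F.le s a))

/-- The set reduction property. -/
def SetReductionProperty (𝕄 : GBModel) (F : ClassForcing 𝕄) : Prop :=
  ∀ A : ZFSet, A ∈ 𝕄.M → (∀ a : ZFSet, a ∈ A → a ∈ F.P) →
    ∀ p ∈ F.P, ∃ q ∈ F.P, F.le q p ∧ ∃ Q : ZFSet, IsCompleteSub 𝕄 F Q ∧ StarProp 𝕄 F A q Q

/-- Every new set added by `ℙ` is added by a set-sized complete subforcing of `ℙ`. -/
def EveryNewSetBySub (𝕄 : GBModel) (F : ClassForcing 𝕄) : Prop :=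
  ∀ G : Set ZFSet, IsGeneric 𝕄 F.P F.le G →
    ∀ x : ZFSet, x ∈ MGen 𝕄 F.P G → x ∉ 𝕄.M →
      ∃ Q : ZFSet, IsCompleteSub 𝕄 F Q ∧ x ∈ MGen 𝕄 Q.toSet (G ∩ Q.toSet)

/-! ### The q-reduction of a name -/

/-- First component of a Kuratowski pair (junk value `∅` otherwise). -/
def fstZ (x : ZFSet) : ZFSet :=
  if h : ∃ a b : ZFSet, x = a.pair b then h.choose else ∅

/-- Second component of a Kuratowski pair (junk value `∅` otherwise). -/
def sndZ (x : ZFSet) : ZFSet :=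
  if h : ∃ a b : ZFSet, x = a.pair b then h.choose_spec.choose else ∅

/-- Cartesian product of two `ZFSet`s. -/
def zprod (a b : ZFSet) : ZFSet :=
  ZFSet.sep (fun x => ∃ u v : ZFSet, u ∈ a ∧ v ∈ b ∧ x = u.pair v)
    (ZFSet.powerset (ZFSet.powerset (a ∪ b)))

/-- Auxiliary rank-bounded version of the `q`-reduction of a name to `Q`. -/
def reduceAux (S : Set ZFSet) (le : ZFSet → ZFSet → Prop) (Q q : ZFSet) (o : Ordinal)
    (σ : ZFSet) : ZFSet :=
  zimage
    (fun x =>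
      (if h : (fstZ x).rank < o then reduceAux S le Q q (fstZ x).rank (fstZ x) else ∅).pair
        (sndZ x))
    (ZFSet.sep
      (fun x => ∃ τ r : ZFSet, x = τ.pair r ∧ r ∈ Q ∧
        ∃ a : ZFSet, τ.pair a ∈ σ ∧ ∀ s ∈ S, le s q → le s r → leStar S le s a)
      (zprod (ZFSet.sUnion (ZFSet.sUnion σ)) Q))
termination_by o
decreasing_by exact h

/-- The `q`-reduction `σ_q^ℚ = {⟨τ_q^ℚ, r⟩ | r ∈ ℚ ∧ ∃a (⟨τ,a⟩ ∈ σ ∧ ∀ s ≤ q,r (s ≤* a))}`. -/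
def reduceName (S : Set ZFSet) (le : ZFSet → ZFSet → Prop) (Q q σ : ZFSet) : ZFSet :=
  reduceAux S le Q q σ.rank σ

/-! ### Projections -/

/-- `f` is a projection from `⟨S, le⟩` (with maximum `one`) onto the subforcing with domain
`Qs`, respecting `X`. -/
def IsProjectionResp (S : Set ZFSet) (le : ZFSet → ZFSet → Prop) (one : ZFSet)
    (Qs X : Set ZFSet) (f : ZFSet → ZFSet) : Prop :=
  (∀ p ∈ S, f p ∈ Qs) ∧
  f one = one ∧
  (∀ p ∈ S, ∀ q ∈ S, le p q → le (f p) (f q)) ∧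
  (∀ p ∈ S, ∀ q ∈ Qs, le q (f p) → ∃ r ∈ S, le r p ∧ le (f r) q) ∧
  (∀ p ∈ X, ∀ q ∈ S, le (f q) p → le q p) ∧
  (∀ p ∈ X, f p = p)

/-- `ℙ` is approachable by projections: there is a class `Π ∈ 𝒞` whose sections `π_{X,y}`
are such that for every set `X ⊆ ℙ` there are a set `y` and a set-sized subforcing `ℚ ⊇ X ∪ {𝟙}`
of `ℙ` with `π_{X,y} : ℙ → ℚ` a projection respecting `X`. -/
def ApproachableByProjections (𝕄 : GBModel) (F : ClassForcing 𝕄) : Prop :=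
  ∃ Pi ∈ 𝕄.Cls, ∀ X : ZFSet, X ∈ 𝕄.M → (∀ x : ZFSet, x ∈ X → x ∈ F.P) →
    ∃ y ∈ 𝕄.M, ∃ Q : ZFSet, Q ∈ 𝕄.M ∧ Q.toSet ⊆ F.P ∧ (∀ x : ZFSet, x ∈ X → x ∈ Q) ∧
      F.one ∈ Q ∧ ∃ f : ZFSet → ZFSet,
        (∀ u ∈ F.P, ∀ v : ZFSet, (f u = v ↔ X.pair (y.pair (u.pair v)) ∈ Pi)) ∧
        IsProjectionResp F.P F.le F.one Q.toSet X.toSet f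

/-- `p ⊩ σ ⊆ τ` for the forcing with domain `S` and ordering `le`. -/
def ForcesSubset (𝕄 : GBModel) (S : Set ZFSet) (le : ZFSet → ZFSet → Prop)
    (p σ τ : ZFSet) : Prop :=
  ∀ G : Set ZFSet, IsGeneric 𝕄 S le G → p ∈ G → nameEval G σ ⊆ nameEval G τ

/-! ### Bounded names, turning proper classes into sets -/

/-- The possible values of the name `σ` in generic extensions. -/
def PossibleValues (𝕄 : GBModel) (S : Set ZFSet) (le : ZFSet → ZFSet → Prop)
    (σ : ZFSet) : Set ZFSet :=
  {x | ∃ G : Set ZFSet, IsGeneric 𝕄 S le G ∧ nameEval G σ = x}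

/-- The name `σ` is bounded: some `A ∈ M` covers all its possible values lying in `M`. -/
def IsBoundedName (𝕄 : GBModel) (F : ClassForcing 𝕄) (σ : ZFSet) : Prop :=
  ∃ A ∈ 𝕄.M, PossibleValues 𝕄 F.P F.le σ ∩ 𝕄.M ⊆ A.toSet

/-- `ℙ` has bounded names: every `ℙ`-name in `M` is bounded. -/
def HasBoundedNames (𝕄 : GBModel) (F : ClassForcing 𝕄) : Prop :=
  ∀ σ : ZFSet, σ ∈ 𝕄.M → IsName F.P σ → IsBoundedName 𝕄 F σ

/-- `X` is a proper class of `𝕄`: a class of `𝕄` that is not (the extension of) a set of `𝕄`. -/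
def IsProperClass (𝕄 : GBModel) (X : Set ZFSet) : Prop :=
  X ∈ 𝕄.Cls ∧ ¬ ∃ x ∈ 𝕄.M, x.toSet = X

/-- The proper class `X` of `𝕄` is turned into a set by forcing with `ℙ`: some `ℙ`-name in `M`
evaluates to `X` under some generic filter. -/
def TurnsIntoSet (𝕄 : GBModel) (F : ClassForcing 𝕄) (X : Set ZFSet) : Prop :=
  ∃ σ : ZFSet, σ ∈ 𝕄.M ∧ IsName F.P σ ∧
    ∃ G : Set ZFSet, IsGeneric 𝕄 F.P F.le G ∧ (nameEval G σ).toSet = X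

/-! ### Functions and partial functions as sets, collapse forcings -/

/-- `p` is a partial function from (a subset of) `γ` into the class `Y`. -/
def IsPFunOn (p γ : ZFSet) (Y : Set ZFSet) : Prop :=
  (∀ x : ZFSet, x ∈ p → ∃ a b : ZFSet, x = a.pair b ∧ a ∈ γ ∧ b ∈ Y) ∧
  ∀ a b b' : ZFSet, a.pair b ∈ p → a.pair b' ∈ p → b = b'

/-- The domain of a set of pairs. -/
def pdom (p : ZFSet) : Set ZFSet := {a | ∃ b : ZFSet, a.pair b ∈ p}

/-- `f` is (the graph of) an injective function from `X` into `Y`. -/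
def ZInjFun (f : ZFSet) (X Y : Set ZFSet) : Prop :=
  (∀ x : ZFSet, x ∈ f → ∃ a b : ZFSet, x = a.pair b ∧ a ∈ X ∧ b ∈ Y) ∧
  (∀ a b b' : ZFSet, a.pair b ∈ f → a.pair b' ∈ f → b = b') ∧
  (∀ a ∈ X, ∃ b : ZFSet, a.pair b ∈ f) ∧
  (∀ a a' b : ZFSet, a.pair b ∈ f → a'.pair b ∈ f → a = a')

/-- `D` has size less than the cardinality of `γ` in the sense of `M`:
no function of `M` injects `γ` into `D`. -/
def SmallerThan (𝕄 : GBModel) (γ : ZFSet) (D : Set ZFSet) : Prop :=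
  ¬ ∃ f ∈ 𝕄.M, ZInjFun f γ.toSet D

/-- Conditions of `Col(γ, Y)^M`: partial functions of `M` from `γ` to `Y` whose domain has
size less than the cardinality of `γ` in `M`. -/
def ColCond (𝕄 : GBModel) (γ : ZFSet) (Y : Set ZFSet) (p : ZFSet) : Prop :=
  p ∈ 𝕄.M ∧ IsPFunOn p γ Y ∧ SmallerThan 𝕄 γ (pdom p)

/-- Conditions of `Col₋*(γ, Y)^M`: those conditions of `Col(γ, Y)^M` whose domain is
an ordinal. -/
def ColStarCond (𝕄 : GBModel) (γ : ZFSet) (Y : Set ZFSet) (p : ZFSet) : Prop :=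
  ColCond 𝕄 γ Y p ∧ ∃ β : ZFSet, β.IsOrdinal ∧ pdom p = β.toSet

/-- `f` is (the graph of) a function with domain `I`. -/
def ZFuncOn (f I : ZFSet) : Prop :=
  (∀ x : ZFSet, x ∈ f → ∃ a b : ZFSet, x = a.pair b ∧ a ∈ I) ∧
  (∀ a b b' : ZFSet, a.pair b ∈ f → a.pair b' ∈ f → b = b') ∧
  (∀ a : ZFSet, a ∈ I → ∃ b : ZFSet, a.pair b ∈ f)

/-- Application of a set-function to an argument (junk value `∅` if undefined). -/
def zapp (f i : ZFSet) : ZFSet :=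
  if h : ∃ b : ZFSet, i.pair b ∈ f then h.choose else ∅

/-! ### Pretameness -/

/-- `ℙ` is pretame for `𝕄`: for every `p ∈ ℙ`, `I ∈ M` and every `𝒞`-coded sequence
`⟨D_i | i ∈ I⟩` (coded as the class of pairs `⟨i, x⟩` with `x ∈ D_i`) of dense subclasses
of `ℙ`, there are `q ≤ p` and `⟨d_i | i ∈ I⟩ ∈ M` with `d_i ⊆ D_i` predense below `q`. -/
def Pretame (𝕄 : GBModel) (F : ClassForcing 𝕄) : Prop :=
  ∀ p ∈ F.P, ∀ I : ZFSet, I ∈ 𝕄.M → ∀ D ∈ 𝕄.Cls,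
    (∀ i : ZFSet, i ∈ I →
      (∀ x : ZFSet, i.pair x ∈ D → x ∈ F.P) ∧ ∀ r ∈ F.P, ∃ s : ZFSet, i.pair s ∈ D ∧ F.le s r) →
    ∃ q ∈ F.P, F.le q p ∧ ∃ d ∈ 𝕄.M, ZFuncOn d I ∧
      ∀ i : ZFSet, i ∈ I → (∀ x : ZFSet, x ∈ zapp d i → i.pair x ∈ D) ∧
        ∀ r ∈ F.P, F.le r q → ∃ a : ZFSet, a ∈ zapp d i ∧ Compat F.P F.le r a

/-! ### The specific forcings of Sections 6 and 7 -/

/-- Conditions of Definition 6.8: (not necessarily finite) partial functions from `ω` to `2`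
lying in `M`. -/
def PCond (𝕄 : GBModel) (p : ZFSet) : Prop :=
  p ∈ 𝕄.M ∧ IsPFunOn p ZFSet.omega {x : ZFSet | x = ∅ ∨ x = ({∅} : ZFSet)}

/-- Conditions of the finite support product `ℚ` of `ω` many copies of `ℙ`:
finite sequences `⟨p₀, …, p_k⟩` of `ℙ`-conditions. -/
def QCond (𝕄 : GBModel) (s : ZFSet) : Prop :=
  s ∈ 𝕄.M ∧ ∃ n : ZFSet, n ∈ ZFSet.omega ∧ ZFuncOn s n ∧
    ∀ i : ZFSet, i ∈ n → PCond 𝕄 (zapp s i)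

/-- The coordinatewise ordering on `ℚ`. -/
def QLe (s' s : ZFSet) : Prop :=
  pdom s ⊆ pdom s' ∧ ∀ i ∈ pdom s, zapp s i ⊆ zapp s' i

/-- The power class `𝒫(ω)^M`. -/
def PowOmega (𝕄 : GBModel) : Set ZFSet :=
  {x : ZFSet | x ∈ 𝕄.M ∧ x ⊆ ZFSet.omega}

/-- `X ⊆ M` is definable over `⟨M, ∈⟩` (from set parameters). -/
def DefinableOver (Mset : Set ZFSet) (X : Set ZFSet) : Prop :=
  ∃ (φ : EFormula) (v : ℕ → ZFSet), (∀ n, v n ∈ Mset) ∧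
    X = {x : ZFSet | x ∈ Mset ∧ EFormula.Sat Mset (Function.update v 0 x) φ}

/-- Every set of `M` is countable in `M`: it injects into `ω` by a function of `M`. -/
def AllSetsCountable (𝕄 : GBModel) : Prop :=
  ∀ x ∈ 𝕄.M, ∃ f ∈ 𝕄.M, ZInjFun f x.toSet ZFSet.omega.toSet


section CFHelpers

set_option linter.unusedVariables false

universe u

/-! ### Definability calculus -/

/-- Renaming of set variables (by `f`) and class parameters (by `g`). -/
def GBFormula.ren (f g : ℕ → ℕ) : GBFormula → GBFormula
  | .mem i j => .mem (f i) (f j)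
  | .eq i j => .eq (f i) (f j)
  | .cls i j => .cls (f i) (g j)
  | .not φ => .not (φ.ren f g)
  | .or φ ψ => .or (φ.ren f g) (ψ.ren f g)
  | .ex i φ => .ex (f i) (φ.ren f g)

theorem GBFormula.sat_ren (D : Set ZFSet.{u}) (Cs : ℕ → Set ZFSet.{u}) (f g : ℕ → ℕ)
    (hf : Function.Injective f) (φ : GBFormula) : ∀ v : ℕ → ZFSet.{u},
    ((φ.ren f g).Sat D Cs v ↔ φ.Sat D (fun n => Cs (g n)) (fun n => v (f n))) := by
  induction φ with
  | mem i j => intro v; exact Iff.rfl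
  | eq i j => intro v; exact Iff.rfl
  | cls i j => intro v; exact Iff.rfl
  | not φ ih => intro v; exact not_congr (ih v)
  | or φ ψ ih1 ih2 => intro v; exact or_congr (ih1 v) (ih2 v)
  | ex i φ ih =>
    intro v
    refine exists_congr fun x => and_congr_right fun _ => ?_
    rw [ih]
    have : (fun n => Function.update v (f i) x (f n)) =
        Function.update (fun n => v (f n)) i x := by
      funext n
      by_cases h : n = i
      · subst h; simp
      · rw [Function.update_of_ne h, Function.update_of_ne (fun e => h (hf e))]
    rw [this]

/-- Predicates on assignments that are first-order definable over `𝕄` with class parameters. -/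
inductive Dfb (𝕄 : GBModel.{u}) : ((ℕ → ZFSet.{u}) → Prop) → Prop
  | mem (i j : ℕ) : Dfb 𝕄 (fun v => v i ∈ v j)
  | eq (i j : ℕ) : Dfb 𝕄 (fun v => v i = v j)
  | cls (i : ℕ) (C : Set ZFSet.{u}) (hC : C ∈ 𝕄.Cls) : Dfb 𝕄 (fun v => v i ∈ C)
  | not {A : (ℕ → ZFSet.{u}) → Prop} : Dfb 𝕄 A → Dfb 𝕄 (fun v => ¬ A v)
  | or {A B : (ℕ → ZFSet.{u}) → Prop} : Dfb 𝕄 A → Dfb 𝕄 B → Dfb 𝕄 (fun v => A v ∨ B v)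
  | ex {A : ZFSet.{u} → (ℕ → ZFSet.{u}) → Prop} :
      Dfb 𝕄 (fun v => A (v 0) (fun n => v (n + 1))) → Dfb 𝕄 (fun v => ∃ x ∈ 𝕄.M, A x v)
  | congr {A B : (ℕ → ZFSet.{u}) → Prop} : Dfb 𝕄 A →
      (∀ v : ℕ → ZFSet.{u}, (∀ n, v n ∈ 𝕄.M) → (A v ↔ B v)) → Dfb 𝕄 B

variable {𝕄 : GBModel.{u}}

theorem Dfb.subst {A : (ℕ → ZFSet.{u}) → Prop} (h : Dfb 𝕄 A) :
    ∀ g : ℕ → ℕ, Dfb 𝕄 (fun v => A (fun n => v (g n))) := by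
  induction h with
  | mem i j => intro g; exact Dfb.mem (g i) (g j)
  | eq i j => intro g; exact Dfb.eq (g i) (g j)
  | cls i C hC => intro g; exact Dfb.cls (g i) C hC
  | not _ ih => intro g; exact (ih g).not
  | or _ _ ih1 ih2 => intro g; exact (ih1 g).or (ih2 g)
  | @ex A _ ih =>
    intro g
    refine Dfb.ex (A := fun x v => A x (fun n => v (g n))) ?_
    exact ih (fun n => Nat.casesOn n 0 (fun k => g k + 1))
  | congr _ h2 ih =>
    intro g
    exact (ih g).congr fun v hv => h2 _ fun n => hv _

theorem Dfb.toFormula {A : (ℕ → ZFSet.{u}) → Prop} (h : Dfb 𝕄 A) :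
    ∃ (φ : GBFormula) (Cs : ℕ → Set ZFSet.{u}), (∀ n, Cs n ∈ 𝕄.Cls) ∧
      ∀ v : ℕ → ZFSet.{u}, (∀ n, v n ∈ 𝕄.M) →
        (φ.Sat 𝕄.M Cs v ↔ A (fun n => v (2 * n))) := by
  have h0 : (∅ : ZFSet.{u}).toSet ∈ 𝕄.Cls := 𝕄.sets_are_classes _ 𝕄.empty_mem
  induction h with
  | mem i j => exact ⟨.mem (2 * i) (2 * j), fun _ => _, fun _ => h0, fun v _ => Iff.rfl⟩
  | eq i j => exact ⟨.eq (2 * i) (2 * j), fun _ => _, fun _ => h0, fun v _ => Iff.rfl⟩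
  | cls i C hC => exact ⟨.cls (2 * i) 0, fun _ => C, fun _ => hC, fun v _ => Iff.rfl⟩
  | not _ ih =>
    obtain ⟨φ, Cs, hC, hs⟩ := ih
    exact ⟨.not φ, Cs, hC, fun v hv => not_congr (hs v hv)⟩
  | or _ _ ih1 ih2 =>
    obtain ⟨φ, Cs, hC, hs⟩ := ih1
    obtain ⟨ψ, Ds, hD, ht⟩ := ih2
    refine ⟨.or (φ.ren id (fun n => 2 * n)) (ψ.ren id (fun n => 2 * n + 1)),
      fun n => if n % 2 = 0 then Cs (n / 2) else Ds (n / 2), ?_, ?_⟩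
    · intro n
      dsimp only
      split
      · exact hC _
      · exact hD _
    · intro v hv
      refine or_congr ?_ ?_
      · rw [GBFormula.sat_ren _ _ _ _ Function.injective_id, ← hs v hv]
        simp
      · rw [GBFormula.sat_ren _ _ _ _ Function.injective_id, ← ht v hv]
        have e : ∀ n, (2 * n + 1) / 2 = n := fun n => by omega
        have e' : ∀ n, (2 * n + 1) % 2 = 1 := fun n => by omega
        simp [e, e']
  | @ex A _ ih =>
    obtain ⟨φ, Cs, hC, hs⟩ := ih
    let f : ℕ → ℕ := fun n => if n % 2 = 0 then (if n = 0 then 1 else n - 2) else 2 * n + 1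
    have hf : Function.Injective f := by
      intro a b hab
      simp only [f] at hab
      split_ifs at hab <;> omega
    refine ⟨.ex 1 (φ.ren f id), Cs, hC, ?_⟩
    intro v hv
    refine exists_congr fun x => and_congr_right fun hx => ?_
    rw [GBFormula.sat_ren _ _ _ _ hf]
    have hup : ∀ n, Function.update v 1 x n ∈ 𝕄.M := by
      intro n
      by_cases h : n = 1
      · subst h; simpa using hx
      · rw [Function.update_of_ne h]; exact hv n
    have := hs (fun n => Function.update v 1 x (f n)) (fun n => hup _)
    refine this.trans ?_
    have e1 : Function.update v 1 x (f (2 * 0)) = x := by simp [f]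
    have e2 : (fun n => Function.update v 1 x (f (2 * (n + 1)))) = fun n => v (2 * n) := by
      funext n
      have : f (2 * (n + 1)) = 2 * n := by simp [f]; omega
      rw [this, Function.update_of_ne (by omega)]
    change A (Function.update v 1 x (f (2 * 0)))
      (fun n => Function.update v 1 x (f (2 * (n + 1)))) ↔ _
    rw [e1, e2]
  | congr _ h2 ih =>
    obtain ⟨φ, Cs, hC, hs⟩ := ih
    exact ⟨φ, Cs, hC, fun v hv => (hs v hv).trans (h2 _ fun n => hv _)⟩

theorem Dfb.toCls {A : ZFSet.{u} → Prop} (h : Dfb 𝕄 (fun v => A (v 0))) :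
    {x : ZFSet.{u} | x ∈ 𝕄.M ∧ A x} ∈ 𝕄.Cls := by
  obtain ⟨φ, Cs, hC, hs⟩ := h.toFormula
  have := 𝕄.comprehension φ (fun _ => ∅) Cs (fun _ => 𝕄.empty_mem) hC
  convert this using 1
  ext x
  refine and_congr_right fun hx => ?_
  rw [hs]
  · simp
  · intro n
    by_cases h : n = 0
    · subst h; simpa using hx
    · rw [Function.update_of_ne h]; exact 𝕄.empty_mem

theorem Dfb.and {A B : (ℕ → ZFSet.{u}) → Prop} (h1 : Dfb 𝕄 A) (h2 : Dfb 𝕄 B) :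
    Dfb 𝕄 (fun v => A v ∧ B v) :=
  (h1.not.or h2.not).not.congr fun v _ => by tauto

theorem Dfb.imp {A B : (ℕ → ZFSet.{u}) → Prop} (h1 : Dfb 𝕄 A) (h2 : Dfb 𝕄 B) :
    Dfb 𝕄 (fun v => A v → B v) :=
  (h1.not.or h2).congr fun v _ => by tauto

theorem Dfb.iff {A B : (ℕ → ZFSet.{u}) → Prop} (h1 : Dfb 𝕄 A) (h2 : Dfb 𝕄 B) :
    Dfb 𝕄 (fun v => A v ↔ B v) :=
  ((h1.imp h2).and (h2.imp h1)).congr fun v _ => by tauto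

theorem Dfb.all {A : ZFSet.{u} → (ℕ → ZFSet.{u}) → Prop}
    (h : Dfb 𝕄 (fun v => A (v 0) (fun n => v (n + 1)))) :
    Dfb 𝕄 (fun v => ∀ x ∈ 𝕄.M, A x v) :=
  (Dfb.ex (A := fun x v => ¬ A x v) h.not).not.congr fun v _ => by
    push Not; rfl

/-- Definable terms. -/
structure DT (𝕄 : GBModel.{u}) (t : (ℕ → ZFSet.{u}) → ZFSet.{u}) : Prop where
  mem : ∀ v : ℕ → ZFSet.{u}, (∀ n, v n ∈ 𝕄.M) → t v ∈ 𝕄.M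
  df : Dfb 𝕄 (fun v => v 0 = t (fun n => v (n + 1)))

theorem DT.var (i : ℕ) : DT 𝕄 (fun v => v i) := ⟨fun _ hv => hv i, Dfb.eq 0 (i + 1)⟩

theorem Dfb.subT {t : (ℕ → ZFSet.{u}) → ZFSet.{u}} {A : ZFSet.{u} → (ℕ → ZFSet.{u}) → Prop}
    (ht : DT 𝕄 t) (h : Dfb 𝕄 (fun v => A (v 0) (fun n => v (n + 1)))) :
    Dfb 𝕄 (fun v => A (t v) v) :=
  (Dfb.ex (A := fun x v => x = t v ∧ A x v) (ht.df.and h)).congr fun v hv =>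
    ⟨fun ⟨_, _, e, hx⟩ => e ▸ hx, fun hx => ⟨_, ht.mem v hv, rfl, hx⟩⟩

theorem DT.shift {t : (ℕ → ZFSet.{u}) → ZFSet.{u}} (ht : DT 𝕄 t) :
    DT 𝕄 (fun v => t (fun n => v (n + 1))) :=
  ⟨fun v hv => ht.mem _ fun n => hv _,
    ht.df.subst (fun n => Nat.casesOn n 0 (fun k => k + 2))⟩

theorem Dfb.subT2 {t s : (ℕ → ZFSet.{u}) → ZFSet.{u}} {A : ZFSet.{u} → ZFSet.{u} → Prop}
    (ht : DT 𝕄 t) (hs : DT 𝕄 s) (h : Dfb 𝕄 (fun v => A (v 0) (v 1))) :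
    Dfb 𝕄 (fun v => A (t v) (s v)) := by
  refine Dfb.subT (A := fun x v => A x (s v)) ht ?_
  refine Dfb.subT (A := fun y v => A (v 0) y) hs.shift ?_
  exact h.subst (fun n => if n = 0 then 1 else 0)

theorem Dfb.subT3 {t s r : (ℕ → ZFSet.{u}) → ZFSet.{u}}
    {A : ZFSet.{u} → ZFSet.{u} → ZFSet.{u} → Prop}
    (ht : DT 𝕄 t) (hs : DT 𝕄 s) (hr : DT 𝕄 r) (h : Dfb 𝕄 (fun v => A (v 0) (v 1) (v 2))) :
    Dfb 𝕄 (fun v => A (t v) (s v) (r v)) := by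
  refine Dfb.subT (A := fun x v => A x (s v) (r v)) ht ?_
  refine Dfb.subT (A := fun y v => A (v 0) y (r fun n => v (n + 1))) hs.shift ?_
  refine Dfb.subT (A := fun y v => A (v 1) (v 0) y) hr.shift.shift ?_
  exact h.subst (fun n => if n = 0 then 2 else if n = 1 then 1 else 0)

theorem Dfb.memT {t s : (ℕ → ZFSet.{u}) → ZFSet.{u}} (ht : DT 𝕄 t) (hs : DT 𝕄 s) :
    Dfb 𝕄 (fun v => t v ∈ s v) := Dfb.subT2 (A := fun a b => a ∈ b) ht hs (Dfb.mem 0 1)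

theorem Dfb.eqT {t s : (ℕ → ZFSet.{u}) → ZFSet.{u}} (ht : DT 𝕄 t) (hs : DT 𝕄 s) :
    Dfb 𝕄 (fun v => t v = s v) := Dfb.subT2 (A := fun a b => a = b) ht hs (Dfb.eq 0 1)

theorem Dfb.clsT {t : (ℕ → ZFSet.{u}) → ZFSet.{u}} {C : Set ZFSet.{u}} (hC : C ∈ 𝕄.Cls)
    (ht : DT 𝕄 t) : Dfb 𝕄 (fun v => t v ∈ C) :=
  Dfb.subT (A := fun x _ => x ∈ C) ht (Dfb.cls 0 C hC)

theorem DT.const {c : ZFSet.{u}} (hc : c ∈ 𝕄.M) : DT 𝕄 (fun _ => c) := by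
  refine ⟨fun _ _ => hc, ?_⟩
  refine (Dfb.all (A := fun x v => x ∈ v 0 ↔ x ∈ c.toSet)
    ((Dfb.mem 0 1).iff (Dfb.cls 0 _ (𝕄.sets_are_classes c hc)))).congr fun v hv => ?_
  constructor
  · intro h
    ext x
    exact ⟨fun hx => (h x (𝕄.transitive _ (hv 0) _ hx)).1 hx,
      fun hx => (h x (𝕄.transitive _ hc _ hx)).2 hx⟩
  · rintro h x _
    rw [h]; rfl

theorem Dfb.exb {t : (ℕ → ZFSet.{u}) → ZFSet.{u}} {A : ZFSet.{u} → (ℕ → ZFSet.{u}) → Prop}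
    (ht : DT 𝕄 t) (h : Dfb 𝕄 (fun v => A (v 0) (fun n => v (n + 1)))) :
    Dfb 𝕄 (fun v => ∃ x, x ∈ t v ∧ A x v) :=
  (Dfb.ex (A := fun x v => x ∈ t v ∧ A x v) ((Dfb.memT (DT.var 0) ht.shift).and h)).congr
    fun v hv => exists_congr fun x =>
      ⟨fun h => h.2, fun h => ⟨𝕄.transitive _ (ht.mem v hv) _ h.1, h⟩⟩

theorem Dfb.allb {t : (ℕ → ZFSet.{u}) → ZFSet.{u}} {A : ZFSet.{u} → (ℕ → ZFSet.{u}) → Prop}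
    (ht : DT 𝕄 t) (h : Dfb 𝕄 (fun v => A (v 0) (fun n => v (n + 1)))) :
    Dfb 𝕄 (fun v => ∀ x, x ∈ t v → A x v) :=
  (Dfb.all (A := fun x v => x ∈ t v → A x v) ((Dfb.memT (DT.var 0) ht.shift).imp h)).congr
    fun v hv => forall_congr' fun x =>
      ⟨fun h hx => h (𝕄.transitive _ (ht.mem v hv) _ hx) hx, fun h _ hx => h hx⟩

theorem Dfb.exC {C : Set ZFSet.{u}} {A : ZFSet.{u} → (ℕ → ZFSet.{u}) → Prop}
    (hC : C ∈ 𝕄.Cls) (h : Dfb 𝕄 (fun v => A (v 0) (fun n => v (n + 1)))) :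
    Dfb 𝕄 (fun v => ∃ x, x ∈ C ∧ A x v) :=
  (Dfb.ex (A := fun x v => x ∈ C ∧ A x v) ((Dfb.cls 0 C hC).and h)).congr
    fun v hv => exists_congr fun x =>
      ⟨fun h => h.2, fun h => ⟨𝕄.classes_sub _ hC h.1, h⟩⟩

theorem Dfb.allC {C : Set ZFSet.{u}} {A : ZFSet.{u} → (ℕ → ZFSet.{u}) → Prop}
    (hC : C ∈ 𝕄.Cls) (h : Dfb 𝕄 (fun v => A (v 0) (fun n => v (n + 1)))) :
    Dfb 𝕄 (fun v => ∀ x, x ∈ C → A x v) :=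
  (Dfb.all (A := fun x v => x ∈ C → A x v) ((Dfb.cls 0 C hC).imp h)).congr
    fun v hv => forall_congr' fun x =>
      ⟨fun h hx => h (𝕄.classes_sub _ hC hx) hx, fun h _ hx => h hx⟩

theorem singleton_mem_M {x : ZFSet.{u}} (hx : x ∈ 𝕄.M) : ({x} : ZFSet.{u}) ∈ 𝕄.M := by
  have := 𝕄.pair_mem x hx x hx
  rwa [ZFSet.pair_eq_singleton] at this

theorem opair_mem_M {x y : ZFSet.{u}} (hx : x ∈ 𝕄.M) (hy : y ∈ 𝕄.M) : x.pair y ∈ 𝕄.M :=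
  𝕄.pair_mem _ (singleton_mem_M hx) _ (𝕄.pair_mem _ hx _ hy)

theorem of_pair_mem_M {x y : ZFSet.{u}} (h : x.pair y ∈ 𝕄.M) : x ∈ 𝕄.M ∧ y ∈ 𝕄.M := by
  have h1 : ({x, y} : ZFSet.{u}) ∈ 𝕄.M := 𝕄.transitive _ h _ (by simp [ZFSet.pair])
  exact ⟨𝕄.transitive _ h1 _ (by simp), 𝕄.transitive _ h1 _ (by simp)⟩

theorem Dfb.upairV : Dfb 𝕄 (fun v => v 0 = ({v 1, v 2} : ZFSet.{u})) := by
  refine (Dfb.all (A := fun x v => x ∈ v 0 ↔ (x = v 1 ∨ x = v 2))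
    ((Dfb.mem 0 1).iff ((Dfb.eq 0 2).or (Dfb.eq 0 3)))).congr fun v hv => ?_
  constructor
  · intro h
    ext x
    rw [ZFSet.mem_pair]
    refine ⟨fun hx => (h x (𝕄.transitive _ (hv 0) _ hx)).1 hx, ?_⟩
    rintro (rfl | rfl)
    · exact (h _ (hv 1)).2 (Or.inl rfl)
    · exact (h _ (hv 2)).2 (Or.inr rfl)
  · rintro h x _
    rw [h, ZFSet.mem_pair]

theorem DT.upair {t s : (ℕ → ZFSet.{u}) → ZFSet.{u}} (ht : DT 𝕄 t) (hs : DT 𝕄 s) :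
    DT 𝕄 (fun v => ({t v, s v} : ZFSet.{u})) :=
  ⟨fun v hv => 𝕄.pair_mem _ (ht.mem v hv) _ (hs.mem v hv),
    Dfb.subT3 (A := fun a b c => a = ({b, c} : ZFSet.{u})) (DT.var 0) ht.shift hs.shift Dfb.upairV⟩

theorem DT.pair {t s : (ℕ → ZFSet.{u}) → ZFSet.{u}} (ht : DT 𝕄 t) (hs : DT 𝕄 s) :
    DT 𝕄 (fun v => (t v).pair (s v)) := by
  have := DT.upair (DT.upair ht ht) (DT.upair ht hs)
  simpa only [ZFSet.pair, ZFSet.pair_eq_singleton] using this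

theorem mem_M_of_pair_mem {x y z : ZFSet.{u}} (hz : z ∈ 𝕄.M) (h : x.pair y ∈ z) :
    x ∈ 𝕄.M ∧ y ∈ 𝕄.M := of_pair_mem_M (𝕄.transitive _ hz _ h)

theorem Dfb.exP {t : (ℕ → ZFSet.{u}) → ZFSet.{u}}
    {A : ZFSet.{u} → ZFSet.{u} → (ℕ → ZFSet.{u}) → Prop}
    (ht : DT 𝕄 t) (h : Dfb 𝕄 (fun v => A (v 1) (v 0) (fun n => v (n + 2)))) :
    Dfb 𝕄 (fun v => ∃ x y, x.pair y ∈ t v ∧ A x y v) :=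
  (Dfb.ex (A := fun x v => ∃ y ∈ 𝕄.M, x.pair y ∈ t v ∧ A x y v)
    (Dfb.ex (A := fun y v => (v 0).pair y ∈ t (fun n => v (n + 1)) ∧ A (v 0) y (fun n => v (n + 1)))
      ((Dfb.memT (DT.pair (DT.var 1) (DT.var 0)) ht.shift.shift).and h))).congr
    fun v hv => by
      constructor
      · rintro ⟨x, _, y, _, h⟩; exact ⟨x, y, h⟩
      · rintro ⟨x, y, h⟩
        have := mem_M_of_pair_mem (ht.mem v hv) h.1
        exact ⟨x, this.1, y, this.2, h⟩

theorem Dfb.allP {t : (ℕ → ZFSet.{u}) → ZFSet.{u}}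
    {A : ZFSet.{u} → ZFSet.{u} → (ℕ → ZFSet.{u}) → Prop}
    (ht : DT 𝕄 t) (h : Dfb 𝕄 (fun v => A (v 1) (v 0) (fun n => v (n + 2)))) :
    Dfb 𝕄 (fun v => ∀ x y, x.pair y ∈ t v → A x y v) :=
  (Dfb.exP (A := fun x y v => ¬ A x y v) ht h.not).not.congr fun v _ => by
    push Not; rfl

theorem Dfb.exU {A : ZFSet.{u} → (ℕ → ZFSet.{u}) → Prop} {i : ℕ}
    (h : Dfb 𝕄 (fun v => A (v i) v)) :
    Dfb 𝕄 (fun v => ∃ x ∈ 𝕄.M, A x (Function.update v i x)) := by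
  refine Dfb.ex (A := fun x v => A x (Function.update v i x)) ?_
  refine (h.subst (fun n => if n = i then 0 else n + 1)).congr fun v _ => ?_
  have : (fun n => v (if n = i then 0 else n + 1)) =
      Function.update (fun n => v (n + 1)) i (v 0) := by
    funext n
    by_cases h : n = i
    · subst h; simp
    · simp [h]
  rw [this]; simp

/-- Separation for definable predicates. -/
theorem sepM {A : ZFSet.{u} → Prop} (h : Dfb 𝕄 (fun v => A (v 0))) {a : ZFSet.{u}}
    (ha : a ∈ 𝕄.M) : ∃ b ∈ 𝕄.M, ∀ x : ZFSet.{u}, x ∈ b ↔ x ∈ a ∧ A x := by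
  obtain ⟨b, hb, hx⟩ := 𝕄.separation _ h.toCls a ha
  refine ⟨b, hb, fun x => (hx x).trans (and_congr_right fun h => ?_)⟩
  exact ⟨fun h => h.2, fun h' => ⟨𝕄.transitive _ ha _ h, h'⟩⟩

/-- Collection for definable predicates. -/
theorem collM {A : ZFSet.{u} → ZFSet.{u} → Prop} (h : Dfb 𝕄 (fun v => A (v 0) (v 1)))
    {a : ZFSet.{u}} (ha : a ∈ 𝕄.M) (hA : ∀ x ∈ a, ∃ y ∈ 𝕄.M, A x y) :
    ∃ b ∈ 𝕄.M, ∀ x ∈ a, ∃ y ∈ b, A x y := by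
  have hd : Dfb 𝕄 (fun v => ∃ x ∈ 𝕄.M, ∃ y ∈ 𝕄.M, v 0 = x.pair y ∧ A x y) :=
    Dfb.ex (Dfb.ex ((Dfb.eqT (DT.var _) (DT.pair (DT.var _) (DT.var _))).and
      (Dfb.subT2 (A := A) (DT.var 1) (DT.var 0) h)))
  have hc := Dfb.toCls (A := fun z => ∃ x ∈ 𝕄.M, ∃ y ∈ 𝕄.M, z = x.pair y ∧ A x y) hd
  obtain ⟨b, hb, hx⟩ := 𝕄.collection _ hc a ha (by
    intro x hx
    obtain ⟨y, hy, hxy⟩ := hA x hx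
    have hxM := 𝕄.transitive _ ha _ hx
    exact ⟨y, hy, opair_mem_M hxM hy, x, hxM, y, hy, rfl, hxy⟩)
  refine ⟨b, hb, fun x hxa => ?_⟩
  obtain ⟨y, hy, _, x', _, y', _, e, h'⟩ := hx x hxa
  obtain ⟨rfl, rfl⟩ := ZFSet.pair_inj.1 e
  exact ⟨y, hy, h'⟩

theorem union_mem_M {x y : ZFSet.{u}} (hx : x ∈ 𝕄.M) (hy : y ∈ 𝕄.M) : x ∪ y ∈ 𝕄.M :=
  𝕄.sUnion_mem _ (𝕄.pair_mem _ hx _ hy)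

theorem prodM {a b : ZFSet.{u}} (ha : a ∈ 𝕄.M) (hb : b ∈ 𝕄.M) :
    ∃ c ∈ 𝕄.M, ∀ x ∈ a, ∀ y ∈ b, x.pair y ∈ c := by
  have h1 : ∀ x ∈ a, ∃ c ∈ 𝕄.M, ∀ y, y ∈ b → x.pair y ∈ c := by
    intro x hx
    have hxM := 𝕄.transitive _ ha _ hx
    obtain ⟨c, hc, h⟩ := collM (𝕄 := 𝕄) (A := fun y z => z = x.pair y)
      (Dfb.eqT (DT.var _) (DT.pair (DT.const hxM) (DT.var _))) hb
      (fun y hy => ⟨_, opair_mem_M hxM (𝕄.transitive _ hb _ hy), rfl⟩)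
    refine ⟨c, hc, fun y hy => ?_⟩
    obtain ⟨z, hz, rfl⟩ := h y hy
    exact hz
  obtain ⟨d, hd, h⟩ := collM (𝕄 := 𝕄) (A := fun x c => ∀ y, y ∈ b → x.pair y ∈ c)
      (Dfb.allb (DT.const hb) (Dfb.memT (DT.pair (DT.var _) (DT.var _)) (DT.var _))) ha h1
  refine ⟨_, 𝕄.sUnion_mem _ hd, fun x hx y hy => ?_⟩
  obtain ⟨c, hc, h'⟩ := h x hx
  exact ZFSet.mem_sUnion_of_mem (h' y hy) hc

/-- Every set of `M` lies in a set of `M` closed under a monotone definable condition, provided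
the condition holds hereditarily. -/
theorem closedM {K : ZFSet.{u} → ZFSet.{u} → Prop} (hK : Dfb 𝕄 (fun v => K (v 0) (v 1)))
    (hmono : ∀ x N N', N ⊆ N' → K x N → K x N') (H : ZFSet.{u} → Prop)
    (hH : ∀ σ, σ ∈ 𝕄.M → H σ → ∀ x ∈ σ,
      (∃ τ, τ ∈ 𝕄.M ∧ τ.rank < σ.rank ∧ H τ ∧ ∀ N, τ ∈ N → K x N)) :
    ∀ σ ∈ 𝕄.M, H σ → ∃ N ∈ 𝕄.M, σ ∈ N ∧ ∀ τ, τ ∈ N → ∀ x, x ∈ τ → K x N := by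
  intro σ
  induction hr : σ.rank using WellFoundedLT.induction generalizing σ with
  | ind r ih =>
    subst hr
    intro hσ hh
    have hcl : Dfb 𝕄 (fun v => ∀ τ, τ ∈ v 1 → ∀ x, x ∈ τ → K x (v 1)) :=
      Dfb.allb (DT.var _) (Dfb.allb (DT.var _) (Dfb.subT2 (A := K) (DT.var 0) (DT.var 3) hK))
    obtain ⟨b, hb, h⟩ := collM (𝕄 := 𝕄)
      (A := fun x N => K x N ∧ ∀ τ, τ ∈ N → ∀ x, x ∈ τ → K x N)
      (hK.and hcl) hσ (by
        intro x hx
        obtain ⟨τ, hτ, hr, hHτ, hk⟩ := hH σ hσ hh x hx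
        obtain ⟨N, hN, h1, h2⟩ := ih _ hr τ rfl hτ hHτ
        exact ⟨N, hN, hk N h1, h2⟩)
    obtain ⟨b', hb', h'⟩ := sepM (𝕄 := 𝕄) (A := fun N => ∀ τ, τ ∈ N → ∀ x, x ∈ τ → K x N)
      (hcl.subst (fun _ => 0)) hb
    have hsub : ∀ N ∈ b', N ⊆ ZFSet.sUnion b' ∪ {σ} := by
      intro N hN z hz
      exact ZFSet.mem_union.2 (Or.inl (ZFSet.mem_sUnion_of_mem hz hN))
    refine ⟨ZFSet.sUnion b' ∪ {σ}, union_mem_M (𝕄.sUnion_mem _ hb') (singleton_mem_M hσ), by simp, ?_⟩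
    intro τ hτ x hx
    rcases ZFSet.mem_union.1 hτ with hτ | hτ
    · obtain ⟨N, hN, hτN⟩ := ZFSet.mem_sUnion.1 hτ
      exact hmono _ _ _ (hsub N hN) (((h' N).1 hN).2 τ hτN x hx)
    · rw [ZFSet.mem_singleton] at hτ
      subst hτ
      obtain ⟨N, hN, h1, h2⟩ := h x hx
      exact hmono _ _ _ (hsub N ((h' N).2 ⟨hN, h2⟩)) h1



/-! ### The atomic forcing relation -/

theorem rank_fst_lt {ρ a σ : ZFSet.{u}} (h : ρ.pair a ∈ σ) : ρ.rank < σ.rank := by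
  have h1 : ρ ∈ ({ρ} : ZFSet.{u}) := by simp
  have h2 : ({ρ} : ZFSet.{u}) ∈ ρ.pair a := by simp [ZFSet.pair]
  exact (ZFSet.rank_lt_of_mem h1).trans ((ZFSet.rank_lt_of_mem h2).trans (ZFSet.rank_lt_of_mem h))

theorem trans_dom {A : ZFSet.{u} → Prop} (hA : ∀ x, A x → ∀ y, y ∈ x → A y) {ρ a σ : ZFSet.{u}}
    (hσ : A σ) (h : ρ.pair a ∈ σ) : A ρ ∧ A a := by
  have h1 : A ({ρ, a} : ZFSet.{u}) := hA _ (hA _ hσ _ h) _ (by simp [ZFSet.pair])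
  exact ⟨hA _ h1 _ (by simp), hA _ h1 _ (by simp)⟩

/-- The order of the forcing restricted to conditions. -/
def leP (F : ClassForcing 𝕄) (p q : ZFSet.{u}) : Prop := p ∈ F.P ∧ q ∈ F.P ∧ F.le p q

theorem leP.trans {F : ClassForcing 𝕄} {p q r : ZFSet.{u}} (h1 : leP F p q) (h2 : leP F q r) :
    leP F p r := ⟨h1.1, h2.2.1, F.le_trans _ _ _ h1.2.2 h2.2.2⟩

theorem leP.rfl {F : ClassForcing 𝕄} {p : ZFSet.{u}} (h : p ∈ F.P) : leP F p p :=
  ⟨h, h, F.le_refl p h⟩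

theorem Dfb.leP {F : ClassForcing 𝕄} {t s : (ℕ → ZFSet.{u}) → ZFSet.{u}} (ht : DT 𝕄 t)
    (hs : DT 𝕄 s) : Dfb 𝕄 (fun v => leP F (t v) (s v)) := by
  refine (Dfb.clsT F.le_cls (DT.pair ht hs)).congr fun v _ => ?_
  constructor
  · rintro ⟨p, hp, q, hq, h, e⟩
    obtain ⟨e1, e2⟩ := ZFSet.pair_inj.1 e
    rw [e1, e2]
    exact ⟨hp, hq, h⟩
  · rintro ⟨hp, hq, h⟩
    exact ⟨_, hp, _, hq, h, rfl⟩

/-- One half of the recursive clause for the forcing relation of equality. -/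
def Half (F : ClassForcing 𝕄) (C : Set ZFSet.{u}) (S : ZFSet.{u} → ZFSet.{u} → ZFSet.{u} → Prop)
    (p σ τ : ZFSet.{u}) : Prop :=
  ∀ ρ a, ρ.pair a ∈ σ → ∀ q, q ∈ C → leP F q p → leP F q a →
    ∃ r, r ∈ C ∧ leP F r q ∧ ∃ ρ' b, ρ'.pair b ∈ τ ∧ leP F r b ∧ S r ρ ρ'

/-- The recursive clause for the forcing relation of equality. -/
def Clause (F : ClassForcing 𝕄) (C : Set ZFSet.{u})
    (S : ZFSet.{u} → ZFSet.{u} → ZFSet.{u} → Prop) (p σ τ : ZFSet.{u}) : Prop :=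
  Half F C S p σ τ ∧ Half F C (fun r x y => S r y x) p τ σ

/-- The forcing relation for equality, for the conditions in `C`. -/
def ER (F : ClassForcing 𝕄) (C : Set ZFSet.{u}) (p σ τ : ZFSet.{u}) : Prop :=
  Half F C (fun r ρ ρ' => ∃ _h : ρ.rank < σ.rank, ER F C r ρ ρ') p σ τ ∧
  Half F C (fun r ρ' ρ => ∃ _h : ρ.rank < σ.rank, ER F C r ρ ρ') p τ σ
termination_by σ.rank

theorem Half.congr {F : ClassForcing 𝕄} {C : Set ZFSet.{u}}
    {S S' : ZFSet.{u} → ZFSet.{u} → ZFSet.{u} → Prop} {p σ τ : ZFSet.{u}}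
    (h : ∀ r ∈ C, ∀ ρ a, ρ.pair a ∈ σ → ∀ ρ' b, ρ'.pair b ∈ τ → (S r ρ ρ' ↔ S' r ρ ρ')) :
    Half F C S p σ τ ↔ Half F C S' p σ τ := by
  unfold Half
  refine forall_congr' fun ρ => forall_congr' fun a => forall_congr' fun hρ =>
    forall_congr' fun q => forall_congr' fun hq => forall_congr' fun _ => forall_congr' fun _ =>
    exists_congr fun r => and_congr_right fun hr => and_congr_right fun _ =>
    exists_congr fun ρ' => exists_congr fun b => and_congr_right fun hb =>
    and_congr_right fun _ => h r hr ρ a hρ ρ' b hb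

theorem Clause.congr {F : ClassForcing 𝕄} {C : Set ZFSet.{u}}
    {S S' : ZFSet.{u} → ZFSet.{u} → ZFSet.{u} → Prop} {p σ τ : ZFSet.{u}}
    (h : ∀ r ∈ C, ∀ ρ a, ρ.pair a ∈ σ → ∀ ρ' b, ρ'.pair b ∈ τ → (S r ρ ρ' ↔ S' r ρ ρ')) :
    Clause F C S p σ τ ↔ Clause F C S' p σ τ :=
  and_congr (Half.congr h)
    (Half.congr fun r hr ρ a hρ ρ' b hb => h r hr ρ' b hb ρ a hρ)

theorem ER_iff (F : ClassForcing 𝕄) (C : Set ZFSet.{u}) (p σ τ : ZFSet.{u}) :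
    ER F C p σ τ ↔ Clause F C (ER F C) p σ τ := by
  rw [ER]
  refine and_congr (Half.congr ?_) (Half.congr ?_)
  · intro r _ ρ a hρ ρ' b _
    exact ⟨fun h => h.2, fun h => ⟨rank_fst_lt hρ, h⟩⟩
  · intro r _ ρ' b _ ρ a hρ
    exact ⟨fun h => h.2, fun h => ⟨rank_fst_lt hρ, h⟩⟩

/-- Uniqueness of solutions of the recursion. -/
theorem ER_unique {F : ClassForcing 𝕄} {C : Set ZFSet.{u}}
    {S : ZFSet.{u} → ZFSet.{u} → ZFSet.{u} → Prop} {A T : ZFSet.{u} → Prop}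
    (hA : ∀ x, A x → ∀ y, y ∈ x → A y) (hT : ∀ x, T x → ∀ y, y ∈ x → T y)
    (hS : ∀ σ, A σ → ∀ τ, T τ → ∀ p, p ∈ C → (S p σ τ ↔ Clause F C S p σ τ)) :
    ∀ σ, A σ → ∀ τ, T τ → ∀ p, p ∈ C → (S p σ τ ↔ ER F C p σ τ) := by
  intro σ
  induction hr : σ.rank using WellFoundedLT.induction generalizing σ with
  | ind r ih =>
    subst hr
    intro hσ τ hτ p hp
    rw [hS σ hσ τ hτ p hp, ER_iff]
    refine Clause.congr fun r hr ρ a hρ ρ' b hb => ?_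
    exact ih _ (rank_fst_lt hρ) ρ rfl (trans_dom hA hσ hρ).1 ρ' (trans_dom hT hτ hb).1 r hr

theorem ER_mono {F : ClassForcing 𝕄} {C : Set ZFSet.{u}} {p q σ τ : ZFSet.{u}}
    (h : ER F C p σ τ) (hq : leP F q p) : ER F C q σ τ := by
  rw [ER_iff] at h ⊢
  exact ⟨fun ρ a hρ r hr h1 h2 => h.1 ρ a hρ r hr (h1.trans hq) h2,
    fun ρ a hρ r hr h1 h2 => h.2 ρ a hρ r hr (h1.trans hq) h2⟩

theorem ER_dense {F : ClassForcing 𝕄} {p σ τ : ZFSet.{u}}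
    (h : ∀ q, q ∈ F.P → leP F q p → ∃ r, r ∈ F.P ∧ leP F r q ∧ ER F F.P r σ τ) :
    ER F F.P p σ τ := by
  rw [ER_iff]
  constructor
  · intro ρ a hρ q hq h1 h2
    obtain ⟨r, hr, hrq, hE⟩ := h q hq h1
    rw [ER_iff] at hE
    obtain ⟨s, hs, hsr, h3⟩ := hE.1 ρ a hρ r hr (leP.rfl hr) (hrq.trans h2)
    exact ⟨s, hs, hsr.trans hrq, h3⟩
  · intro ρ a hρ q hq h1 h2
    obtain ⟨r, hr, hrq, hE⟩ := h q hq h1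
    rw [ER_iff] at hE
    obtain ⟨s, hs, hsr, h3⟩ := hE.2 ρ a hρ r hr (leP.rfl hr) (hrq.trans h2)
    exact ⟨s, hs, hsr.trans hrq, h3⟩

/-- Definability of the clause from definability of the relation. -/
theorem Dfb.clause {F : ClassForcing 𝕄} {C : Set ZFSet.{u}} (hC : C ∈ 𝕄.Cls)
    {S : (ℕ → ZFSet.{u}) → ZFSet.{u} → ZFSet.{u} → ZFSet.{u} → Prop}
    (hS : Dfb 𝕄 (fun v => S (fun n => v (n + 3)) (v 0) (v 1) (v 2)))
    {t s r : (ℕ → ZFSet.{u}) → ZFSet.{u}} (ht : DT 𝕄 t) (hs : DT 𝕄 s) (hr : DT 𝕄 r) :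
    Dfb 𝕄 (fun v => Clause F C (S v) (t v) (s v) (r v)) := by
  unfold Clause Half
  refine Dfb.and ?_ ?_
  · refine Dfb.allP hs (Dfb.allC hC (Dfb.imp (Dfb.leP (DT.var _) ht.shift.shift.shift)
      (Dfb.imp (Dfb.leP (DT.var _) (DT.var _)) (Dfb.exC hC (Dfb.and
        (Dfb.leP (DT.var _) (DT.var _)) (Dfb.exP hr.shift.shift.shift.shift
          (Dfb.and (Dfb.leP (DT.var _) (DT.var _)) ?_)))))))
    exact hS.subst (fun n => if n = 0 then 2 else if n = 1 then 5 else if n = 2 then 1 else n + 3)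
  · refine Dfb.allP hr (Dfb.allC hC (Dfb.imp (Dfb.leP (DT.var _) ht.shift.shift.shift)
      (Dfb.imp (Dfb.leP (DT.var _) (DT.var _)) (Dfb.exC hC (Dfb.and
        (Dfb.leP (DT.var _) (DT.var _)) (Dfb.exP hs.shift.shift.shift.shift
          (Dfb.and (Dfb.leP (DT.var _) (DT.var _)) ?_)))))))
    exact hS.subst (fun n => if n = 0 then 2 else if n = 1 then 1 else if n = 2 then 5 else n + 3)

/-- Transfer of the forcing relation along a projection. -/
theorem ER_proj {F : ClassForcing 𝕄} {Q X : Set ZFSet.{u}} {f : ZFSet.{u} → ZFSet.{u}}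
    (hf : IsProjectionResp F.P F.le F.one Q X f) (hQ : Q ⊆ F.P) {T : ZFSet.{u} → Prop}
    (hT : ∀ x, T x → ∀ y, y ∈ x → T y) (hX : ∀ a, T a → a ∈ F.P → a ∈ X) :
    ∀ σ, T σ → ∀ τ, T τ → ∀ p, p ∈ F.P → (ER F F.P p σ τ ↔ ER F Q (f p) σ τ) := by
  obtain ⟨f1, -, f2, f3, f4, f5⟩ := hf
  have hfP : ∀ p, p ∈ F.P → f p ∈ F.P := fun p hp => hQ (f1 p hp)
  have hfm : ∀ {p q}, leP F p q → leP F (f p) (f q) := fun {p q} h =>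
    ⟨hfP p h.1, hfP q h.2.1, f2 _ h.1 _ h.2.1 h.2.2⟩
  have hfa : ∀ {p a}, T a → leP F p a → leP F (f p) a := fun {p a} ha h => by
    have := hfm h
    rwa [f5 a (hX a ha h.2.1)] at this
  have hfb : ∀ {p a}, T a → p ∈ F.P → leP F (f p) a → leP F p a := fun {p a} ha hp h =>
    ⟨hp, h.2.1, f4 a (hX a ha h.2.1) p hp h.2.2⟩
  -- the two directions for one half of the clause
  have key1 : ∀ (S S' : ZFSet.{u} → ZFSet.{u} → ZFSet.{u} → Prop) (σ τ : ZFSet.{u}), T σ → T τ →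
      (∀ r ∈ F.P, ∀ ρ a, ρ.pair a ∈ σ → ∀ ρ' b, ρ'.pair b ∈ τ → S r ρ ρ' → S' (f r) ρ ρ') →
      ∀ p, p ∈ F.P → Half F F.P S p σ τ → Half F Q S' (f p) σ τ := by
    intro S S' σ τ hσ hτ hS p hp h ρ a hρ q hq hqp hqa
    obtain ⟨q', hq', hq'p, hq'q⟩ := f3 p hp q hq hqp.2.2
    have hle : leP F (f q') q := ⟨hfP _ hq', hQ hq, hq'q⟩
    obtain ⟨r, hr, hrq, ρ', b, hb, hrb, hs⟩ := h ρ a hρ q' hq' ⟨hq', hp, hq'p⟩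
      (hfb (trans_dom hT hσ hρ).2 hq' (hle.trans hqa))
    exact ⟨f r, f1 r hr, (hfm hrq).trans hle, ρ', b, hb, hfa (trans_dom hT hτ hb).2 hrb,
      hS r hr ρ a hρ ρ' b hb hs⟩
  have key2 : ∀ (S S' : ZFSet.{u} → ZFSet.{u} → ZFSet.{u} → Prop) (σ τ : ZFSet.{u}), T σ → T τ →
      (∀ r ∈ F.P, ∀ s, leP F (f r) s → ∀ ρ a, ρ.pair a ∈ σ → ∀ ρ' b, ρ'.pair b ∈ τ →
        S' s ρ ρ' → S r ρ ρ') →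
      ∀ p, p ∈ F.P → Half F Q S' (f p) σ τ → Half F F.P S p σ τ := by
    intro S S' σ τ hσ hτ hS p hp h ρ a hρ q hq hqp hqa
    obtain ⟨r, hr, hrq, ρ', b, hb, hrb, hs⟩ := h ρ a hρ (f q) (f1 q hq) (hfm hqp)
      (hfa (trans_dom hT hσ hρ).2 hqa)
    obtain ⟨r', hr', hr'q, hr'r⟩ := f3 q hq r hr hrq.2.2
    have hle : leP F (f r') r := ⟨hfP _ hr', hQ hr, hr'r⟩
    exact ⟨r', hr', ⟨hr', hq, hr'q⟩, ρ', b, hb, hfb (trans_dom hT hτ hb).2 hr' (hle.trans hrb),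
      hS r' hr' r hle ρ a hρ ρ' b hb hs⟩
  intro σ
  induction hr : σ.rank using WellFoundedLT.induction generalizing σ with
  | ind r ih =>
    subst hr
    intro hσ τ hτ p hp
    have ih' : ∀ r ∈ F.P, ∀ ρ a, ρ.pair a ∈ σ → ∀ ρ' b, ρ'.pair b ∈ τ →
        (ER F F.P r ρ ρ' ↔ ER F Q (f r) ρ ρ') := fun r hr ρ a hρ ρ' b hb =>
      ih _ (rank_fst_lt hρ) ρ rfl (trans_dom hT hσ hρ).1 ρ' (trans_dom hT hτ hb).1 r hr
    rw [ER_iff, ER_iff F Q]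
    constructor
    · rintro ⟨h1, h2⟩
      exact ⟨key1 _ _ σ τ hσ hτ (fun r hr ρ a hρ ρ' b hb => (ih' r hr ρ a hρ ρ' b hb).1) p hp h1,
        key1 _ _ τ σ hτ hσ (fun r hr ρ a hρ ρ' b hb => (ih' r hr ρ' b hb ρ a hρ).1) p hp h2⟩
    · rintro ⟨h1, h2⟩
      exact ⟨key2 _ _ σ τ hσ hτ (fun r hr s hs ρ a hρ ρ' b hb h =>
          (ih' r hr ρ a hρ ρ' b hb).2 (ER_mono h hs)) p hp h1,
        key2 _ _ τ σ hτ hσ (fun r hr s hs ρ a hρ ρ' b hb h =>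
          (ih' r hr ρ' b hb ρ a hρ).2 (ER_mono h hs)) p hp h2⟩

theorem transM {x : ZFSet.{u}} (hx : x ∈ 𝕄.M) :
    ∃ T ∈ 𝕄.M, x ∈ T ∧ ∀ τ, τ ∈ T → ∀ y, y ∈ τ → y ∈ T :=
  closedM (𝕄 := 𝕄) (K := fun y N => y ∈ N) (Dfb.mem 0 1) (fun _ _ _ h hx => h hx) (fun _ => True)
    (fun σ hσ _ x hx => ⟨x, 𝕄.transitive _ hσ _ hx, ZFSet.rank_lt_of_mem hx, trivial,
      fun _ h => h⟩) x hx trivial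

/-- A partial solution `(A, R)` of the recursion for the set forcing `Q`. -/
def GoodR (F : ClassForcing 𝕄) (Q T A R : ZFSet.{u}) : Prop :=
  (∀ x, x ∈ A → ∀ y, y ∈ x → y ∈ A) ∧
  ∀ σ, σ ∈ A → ∀ τ, τ ∈ T → ∀ p, p ∈ Q.toSet →
    (p.pair (σ.pair τ) ∈ R ↔ Clause F Q.toSet (fun r x y => r.pair (x.pair y) ∈ R) p σ τ)

theorem Dfb.goodR {F : ClassForcing 𝕄} {Q T : ZFSet.{u}} (hQ : Q ∈ 𝕄.M) (hT : T ∈ 𝕄.M) :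
    Dfb 𝕄 (fun v => GoodR F Q T (v 0) (v 1)) := by
  unfold GoodR
  have hQ' := 𝕄.sets_are_classes _ hQ
  refine Dfb.and (Dfb.allb (DT.var _) (Dfb.allb (DT.var _) (Dfb.memT (DT.var _) (DT.var _)))) ?_
  refine Dfb.allb (DT.var _) (Dfb.allb (DT.const hT) (Dfb.allC hQ' (Dfb.iff
    (Dfb.memT (DT.pair (DT.var _) (DT.pair (DT.var _) (DT.var _))) (DT.var _)) ?_)))
  exact Dfb.clause hQ' (S := fun v r x y => r.pair (x.pair y) ∈ v 4)
    (Dfb.memT (DT.pair (DT.var _) (DT.pair (DT.var _) (DT.var _))) (DT.var _))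
    (DT.var _) (DT.var _) (DT.var _)

/-- The forcing relation for a set forcing restricted to a set is a set. -/
theorem ER_set (F : ClassForcing 𝕄) {Q T : ZFSet.{u}} (hQ : Q ∈ 𝕄.M) (hT : T ∈ 𝕄.M)
    (hTt : ∀ τ, τ ∈ T → ∀ y, y ∈ τ → y ∈ T) :
    ∃ R ∈ 𝕄.M, ∀ σ, σ ∈ T → ∀ τ, τ ∈ T → ∀ q, q ∈ Q →
      (q.pair (σ.pair τ) ∈ R ↔ ER F Q.toSet q σ τ) := by
  have hQ' := 𝕄.sets_are_classes _ hQ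
  obtain ⟨B0, hB0, hB0'⟩ := prodM (𝕄 := 𝕄) hT hT
  obtain ⟨B, hB, hB'⟩ := prodM (𝕄 := 𝕄) hQ hB0
  have hgood : ∀ A R, GoodR F Q T A R → ∀ σ, σ ∈ A → ∀ τ, τ ∈ T → ∀ q, q ∈ Q →
      (q.pair (σ.pair τ) ∈ R ↔ ER F Q.toSet q σ τ) := fun A R h σ hσ τ hτ q hq =>
    ER_unique (S := fun r x y => r.pair (x.pair y) ∈ R) (A := fun x => x ∈ A) (T := fun x => x ∈ T)
      h.1 hTt h.2 σ hσ τ hτ q hq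
  let A0 : ZFSet.{u} → Prop := fun y => ∃ A ∈ 𝕄.M, ∃ R ∈ 𝕄.M, GoodR F Q T A R ∧ y ∈ A
  let S0 : ZFSet.{u} → ZFSet.{u} → ZFSet.{u} → Prop := fun q σ τ =>
    ∃ A ∈ 𝕄.M, ∃ R ∈ 𝕄.M, GoodR F Q T A R ∧ σ ∈ A ∧ q.pair (σ.pair τ) ∈ R
  have dA0 : Dfb 𝕄 (fun v => A0 (v 0)) :=
    Dfb.ex (Dfb.ex (Dfb.and
      (Dfb.subT2 (A := GoodR F Q T) (DT.var 1) (DT.var 0) (Dfb.goodR hQ hT))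
      (Dfb.memT (DT.var _) (DT.var _))))
  have dS0 : Dfb 𝕄 (fun v => S0 (v 0) (v 1) (v 2)) :=
    Dfb.ex (Dfb.ex (Dfb.and
      (Dfb.subT2 (A := GoodR F Q T) (DT.var 1) (DT.var 0) (Dfb.goodR hQ hT))
      (Dfb.and (Dfb.memT (DT.var _) (DT.var _))
        (Dfb.memT (DT.pair (DT.var _) (DT.pair (DT.var _) (DT.var _))) (DT.var _)))))
  have hA0 : ∀ x, A0 x → ∀ y, y ∈ x → A0 y := by
    rintro x ⟨A, hA, R, hR, hG, hx⟩ y hy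
    exact ⟨A, hA, R, hR, hG, hG.1 x hx y hy⟩
  have hS0 : ∀ σ, A0 σ → ∀ τ, τ ∈ T → ∀ q, q ∈ Q → (S0 q σ τ ↔ ER F Q.toSet q σ τ) := by
    rintro σ ⟨A, hA, R, hR, hG, hσ⟩ τ hτ q hq
    constructor
    · rintro ⟨A', hA', R', hR', hG', hσ', h⟩
      exact (hgood A' R' hG' σ hσ' τ hτ q hq).1 h
    · intro h
      exact ⟨A, hA, R, hR, hG, hσ, (hgood A R hG σ hσ τ hτ q hq).2 h⟩
  -- every element of `T` lies in the domain of a good pair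
  have hall : ∀ σ, σ ∈ T → A0 σ := by
    intro σ
    induction σ using ZFSet.inductionOn with
    | h σ ih =>
      intro hσ
      obtain ⟨A1, hA1, hA1'⟩ := sepM (𝕄 := 𝕄) (A := fun y => ∀ ρ, ρ ∈ y → A0 ρ)
        (Dfb.allb (DT.var _) (Dfb.subT (A := fun x _ => A0 x) (DT.var 0) dA0)) hT
      obtain ⟨R1, hR1, hR1'⟩ := sepM (𝕄 := 𝕄)
        (A := fun t => ∃ q, q ∈ Q ∧ ∃ σ', σ' ∈ T ∧ ∃ τ, τ ∈ T ∧
          t = q.pair (σ'.pair τ) ∧ Clause F Q.toSet S0 q σ' τ)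
        (Dfb.exb (DT.const hQ) (Dfb.exb (DT.const hT) (Dfb.exb (DT.const hT) (Dfb.and
          (Dfb.eqT (DT.var _) (DT.pair (DT.var _) (DT.pair (DT.var _) (DT.var _))))
          (Dfb.clause hQ' (S := fun _ => S0) dS0 (DT.var _) (DT.var _) (DT.var _)))))) hB
      have hRE : ∀ σ', σ' ∈ A1 → ∀ τ, τ ∈ T → ∀ q, q ∈ Q →
          (q.pair (σ'.pair τ) ∈ R1 ↔ ER F Q.toSet q σ' τ) := by
        intro σ' hσ' τ hτ q hq
        have hσT := ((hA1' σ').1 hσ').1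
        have e : Clause F Q.toSet S0 q σ' τ ↔ ER F Q.toSet q σ' τ := by
          rw [ER_iff]
          refine Clause.congr fun r hr ρ a hρ ρ' b hb => ?_
          have hA0ρ : A0 ρ := by
            have h1 : A0 (ρ.pair a) := ((hA1' σ').1 hσ').2 _ hρ
            have h2 : A0 ({ρ, a} : ZFSet.{u}) := hA0 _ h1 _ (by simp [ZFSet.pair])
            exact hA0 _ h2 _ (by simp)
          exact hS0 ρ hA0ρ ρ' (trans_dom (A := fun x => x ∈ T) hTt hτ hb).1 r hr
        rw [hR1', ← e]
        constructor
        · rintro ⟨_, q', _, s', _, t', _, e', h⟩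
          obtain ⟨rfl, e''⟩ := ZFSet.pair_inj.1 e'
          obtain ⟨rfl, rfl⟩ := ZFSet.pair_inj.1 e''
          exact h
        · intro h
          exact ⟨hB' _ hq _ (hB0' _ hσT _ hτ), q, hq, σ', hσT, τ, hτ, rfl, h⟩
      have hA1t : ∀ x, x ∈ A1 → ∀ y, y ∈ x → y ∈ A1 := by
        intro x hx y hy
        have := (hA1' x).1 hx
        exact (hA1' y).2 ⟨hTt _ this.1 _ hy, hA0 y (this.2 y hy)⟩
      refine ⟨A1, hA1, R1, hR1, ⟨hA1t, ?_⟩, (hA1' σ).2 ⟨hσ, fun ρ hρ => ih ρ hρ (hTt _ hσ _ hρ)⟩⟩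
      intro σ' hσ' τ hτ q hq
      rw [hRE σ' hσ' τ hτ q hq, ER_iff]
      refine Clause.congr fun r hr ρ a hρ ρ' b hb => ?_
      exact (hRE ρ (trans_dom (A := fun x => x ∈ A1) hA1t hσ' hρ).1 ρ'
        (trans_dom (A := fun x => x ∈ T) hTt hτ hb).1 r hr).symm
  obtain ⟨R, hR, hR'⟩ := sepM (𝕄 := 𝕄)
    (A := fun t => ∃ q, q ∈ Q ∧ ∃ σ, σ ∈ T ∧ ∃ τ, τ ∈ T ∧ t = q.pair (σ.pair τ) ∧ S0 q σ τ)
    (Dfb.exb (DT.const hQ) (Dfb.exb (DT.const hT) (Dfb.exb (DT.const hT) (Dfb.and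
      (Dfb.eqT (DT.var _) (DT.pair (DT.var _) (DT.pair (DT.var _) (DT.var _))))
      (Dfb.subT3 (A := S0) (DT.var 2) (DT.var 1) (DT.var 0) dS0))))) hB
  refine ⟨R, hR, fun σ hσ τ hτ q hq => ?_⟩
  rw [hR', ← hS0 σ (hall σ hσ) τ hτ q hq]
  constructor
  · rintro ⟨_, q', _, s', _, t', _, e', h⟩
    obtain ⟨rfl, e''⟩ := ZFSet.pair_inj.1 e'
    obtain ⟨rfl, rfl⟩ := ZFSet.pair_inj.1 e''
    exact h
  · intro h
    exact ⟨hB' _ hq _ (hB0' _ hσ _ hτ), q, hq, σ, hσ, τ, hτ, rfl, h⟩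

/-- The relation on `P` obtained from a section of `Π` and a set relation. -/
def SecR (𝕄 : GBModel.{u}) (Pi : Set ZFSet.{u}) (X y R p σ τ : ZFSet.{u}) : Prop :=
  ∃ w ∈ 𝕄.M, X.pair (y.pair (p.pair w)) ∈ Pi ∧ w.pair (σ.pair τ) ∈ R

/-- The forcing relation for equality is definable over `𝕄`. -/
theorem Dfb.ER0 {F : ClassForcing 𝕄} (h : ApproachableByProjections 𝕄 F) :
    Dfb 𝕄 (fun v => ER F F.P (v 0) (v 1) (v 2)) := by
  obtain ⟨Pi, hPi, hap⟩ := h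
  have d1 : Dfb 𝕄 (fun v => v 0 ∈ F.P → ∃ T ∈ 𝕄.M, ∃ X ∈ 𝕄.M, ∃ y ∈ 𝕄.M, ∃ R ∈ 𝕄.M,
      v 1 ∈ T ∧ v 2 ∈ T ∧ (∀ x, x ∈ T → ∀ z, z ∈ x → z ∈ T) ∧
      (∀ σ, σ ∈ T → ∀ τ, τ ∈ T → ∀ p, p ∈ F.P →
        (SecR 𝕄 Pi X y R p σ τ ↔ Clause F F.P (SecR 𝕄 Pi X y R) p σ τ)) ∧
      SecR 𝕄 Pi X y R (v 0) (v 1) (v 2)) := by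
    have dsec : ∀ {t1 t2 t3 t4 t5 t6 : (ℕ → ZFSet.{u}) → ZFSet.{u}}, DT 𝕄 t1 → DT 𝕄 t2 →
        DT 𝕄 t3 → DT 𝕄 t4 → DT 𝕄 t5 → DT 𝕄 t6 →
        Dfb 𝕄 (fun v => SecR 𝕄 Pi (t1 v) (t2 v) (t3 v) (t4 v) (t5 v) (t6 v)) := by
      intro t1 t2 t3 t4 t5 t6 h1 h2 h3 h4 h5 h6
      exact Dfb.ex (Dfb.and
        (Dfb.clsT hPi (DT.pair h1.shift (DT.pair h2.shift (DT.pair h4.shift (DT.var _)))))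
        (Dfb.memT (DT.pair (DT.var _) (DT.pair h5.shift h6.shift)) h3.shift))
    refine Dfb.imp (Dfb.clsT F.P_cls (DT.var _)) (Dfb.ex (Dfb.ex (Dfb.ex (Dfb.ex
      (Dfb.and (Dfb.memT (DT.var _) (DT.var _)) (Dfb.and (Dfb.memT (DT.var _) (DT.var _))
        (Dfb.and (Dfb.allb (DT.var _) (Dfb.allb (DT.var _) (Dfb.memT (DT.var _) (DT.var _))))
          (Dfb.and ?_ ?_))))))))
    · refine Dfb.allb (DT.var _) (Dfb.allb (DT.var _) (Dfb.allC F.P_cls (Dfb.iff ?_ ?_)))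
      · exact dsec (DT.var _) (DT.var _) (DT.var _) (DT.var _) (DT.var _) (DT.var _)
      · exact Dfb.clause F.P_cls (S := fun v => SecR 𝕄 Pi (v 5) (v 4) (v 3))
          (dsec (DT.var _) (DT.var _) (DT.var _) (DT.var _) (DT.var _) (DT.var _))
          (DT.var _) (DT.var _) (DT.var _)
    · exact dsec (DT.var _) (DT.var _) (DT.var _) (DT.var _) (DT.var _) (DT.var _)
  refine d1.congr fun v hv => ?_
  generalize hp : v 0 = p
  generalize hσ : v 1 = σ
  generalize hτ : v 2 = τ
  have hσM : σ ∈ 𝕄.M := hσ ▸ hv 1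
  have hτM : τ ∈ 𝕄.M := hτ ▸ hv 2
  by_cases hpP : p ∈ F.P
  swap
  · refine ⟨fun _ => ?_, fun _ h => absurd h hpP⟩
    rw [ER_iff]
    exact ⟨fun ρ a hρ q hq h => absurd h.2.1 hpP, fun ρ a hρ q hq h => absurd h.2.1 hpP⟩
  constructor
  · intro h
    obtain ⟨T, hT, X, hX, y, hy, R, hR, h1, h2, h3, h4, h5⟩ := h hpP
    exact (ER_unique (S := SecR 𝕄 Pi X y R) (A := fun x => x ∈ T) (T := fun x => x ∈ T)
      h3 h3 h4 σ h1 τ h2 p hpP).1 h5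
  · intro hE _
    obtain ⟨T, hT, hστ, hTt⟩ := transM (𝕄 := 𝕄) (opair_mem_M hσM hτM)
    have hmem : σ ∈ T ∧ τ ∈ T := by
      have h1 : ({σ, τ} : ZFSet.{u}) ∈ T := hTt _ hστ _ (by simp [ZFSet.pair])
      exact ⟨hTt _ h1 _ (by simp), hTt _ h1 _ (by simp)⟩
    obtain ⟨X, hX, hX'⟩ := 𝕄.separation _ F.P_cls T hT
    obtain ⟨y, hy, Q, hQ, hQP, hXQ, -, f, hf, hproj⟩ := hap X hX (fun x hx => ((hX' x).1 hx).2)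
    obtain ⟨R, hR, hR'⟩ := ER_set F hQ hT hTt
    have hpr := ER_proj hproj hQP (T := fun x => x ∈ T) hTt (fun a ha hP => (hX' a).2 ⟨ha, hP⟩)
    have hsec : ∀ σ, σ ∈ T → ∀ τ, τ ∈ T → ∀ p, p ∈ F.P →
        (SecR 𝕄 Pi X y R p σ τ ↔ ER F F.P p σ τ) := by
      intro σ hσ τ hτ p hp
      have hfp : f p ∈ Q := hproj.1 p hp
      rw [hpr σ hσ τ hτ p hp, ← hR' σ hσ τ hτ (f p) hfp]
      constructor
      · rintro ⟨w, _, hw, h⟩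
        rw [(hf p hp w).2 hw]
        exact h
      · intro h
        exact ⟨f p, 𝕄.transitive _ hQ _ hfp, (hf p hp _).1 rfl, h⟩
    refine ⟨T, hT, X, hX, y, hy, R, hR, hmem.1, hmem.2, hTt, ?_,
      (hsec σ hmem.1 τ hmem.2 p hpP).2 hE⟩
    intro σ hσ τ hτ p hp
    rw [hsec σ hσ τ hτ p hp, ER_iff]
    refine Clause.congr fun r hr ρ a hρ ρ' b hb => ?_
    exact (hsec ρ (trans_dom (A := fun x => x ∈ T) hTt hσ hρ).1 ρ'
      (trans_dom (A := fun x => x ∈ T) hTt hτ hb).1 r hr).symm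


variable {F : ClassForcing 𝕄}

/-! ### Names and evaluation -/

theorem isName_iff (S : Set ZFSet.{u}) (σ : ZFSet.{u}) :
    IsName S σ ↔ ∀ x, x ∈ σ → ∃ τ p : ZFSet.{u}, x = τ.pair p ∧ p ∈ S ∧ IsName S τ := by
  unfold IsName
  rw [IsNameAux]
  refine forall_congr' fun x => forall_congr' fun hx => exists_congr fun τ => exists_congr fun p =>
    and_congr_right fun e => and_congr_right fun hp => ?_
  subst e
  exact ⟨fun h => h.2, fun h => ⟨rank_fst_lt hx, h⟩⟩

theorem isName_sub {S : Set ZFSet.{u}} {σ ρ a : ZFSet.{u}} (h : IsName S σ) (hρ : ρ.pair a ∈ σ) :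
    IsName S ρ ∧ a ∈ S := by
  obtain ⟨τ, p, e, hp, hτ⟩ := (isName_iff S σ).1 h _ hρ
  obtain ⟨rfl, rfl⟩ := ZFSet.pair_inj.1 e
  exact ⟨hτ, hp⟩

theorem isName_empty (S : Set ZFSet.{u}) : IsName S (∅ : ZFSet.{u}) := by
  rw [isName_iff]
  intro x hx
  exact absurd hx (ZFSet.notMem_empty x)

theorem mem_zimage (f : ZFSet.{u} → ZFSet.{u}) (x y : ZFSet.{u}) :
    y ∈ zimage f x ↔ ∃ z ∈ x, f z = y :=
  @ZFSet.mem_image f (Classical.allZFSetDefinable _) x y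

theorem mem_nameEval (G : Set ZFSet.{u}) (σ x : ZFSet.{u}) :
    x ∈ nameEval G σ ↔ ∃ τ p : ZFSet.{u}, p ∈ G ∧ τ.pair p ∈ σ ∧ nameEval G τ = x := by
  unfold nameEval
  rw [nameEvalAux, mem_zimage]
  constructor
  · rintro ⟨τ, hτ, rfl⟩
    rw [ZFSet.mem_sep] at hτ
    obtain ⟨_, p, hp, h⟩ := hτ
    refine ⟨τ, p, hp, h, ?_⟩
    rw [dif_pos (rank_fst_lt h)]
  · rintro ⟨τ, p, hp, h, rfl⟩
    refine ⟨τ, ?_, ?_⟩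
    · rw [ZFSet.mem_sep]
      refine ⟨?_, p, hp, h⟩
      have h1 : ({τ} : ZFSet.{u}) ∈ τ.pair p := by simp [ZFSet.pair]
      exact ZFSet.mem_sUnion_of_mem (ZFSet.mem_singleton.2 rfl) (ZFSet.mem_sUnion_of_mem h1 h)
    · rw [dif_pos (rank_fst_lt h)]

theorem nameEval_empty (G : Set ZFSet.{u}) : nameEval G (∅ : ZFSet.{u}) = ∅ := by
  rw [ZFSet.eq_empty]
  intro x hx
  obtain ⟨τ, p, _, h, _⟩ := (mem_nameEval G ∅ x).1 hx
  exact absurd h (ZFSet.notMem_empty _)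

theorem Dfb.isName {t : (ℕ → ZFSet.{u}) → ZFSet.{u}} (ht : DT 𝕄 t) :
    Dfb 𝕄 (fun v => IsName F.P (t v)) := by
  have dK : Dfb 𝕄 (fun v => ∃ ρ, ρ ∈ v 1 ∧ ∃ p, p ∈ F.P ∧ v 0 = ρ.pair p) :=
    Dfb.exb (DT.var _) (Dfb.exC F.P_cls (Dfb.eqT (DT.var _) (DT.pair (DT.var _) (DT.var _))))
  refine Dfb.subT (A := fun x _ => IsName F.P x) ht ?_
  have d1 : Dfb 𝕄 (fun v => ∃ N ∈ 𝕄.M, v 0 ∈ N ∧ ∀ τ, τ ∈ N → ∀ x, x ∈ τ →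
      ∃ ρ, ρ ∈ N ∧ ∃ p, p ∈ F.P ∧ x = ρ.pair p) :=
    Dfb.ex (Dfb.and (Dfb.memT (DT.var _) (DT.var _)) (Dfb.allb (DT.var _) (Dfb.allb (DT.var _)
      (Dfb.exb (DT.var _) (Dfb.exC F.P_cls (Dfb.eqT (DT.var _) (DT.pair (DT.var _) (DT.var _))))))))
  refine d1.congr fun v hv => ?_
  constructor
  · rintro ⟨N, hN, h0, hcl⟩
    have : ∀ σ, σ ∈ N → IsName F.P σ := by
      intro σ
      induction hr : σ.rank using WellFoundedLT.induction generalizing σ with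
      | ind r ih =>
        subst hr
        intro hσ
        rw [isName_iff]
        intro x hx
        obtain ⟨ρ, hρ, p, hp, rfl⟩ := hcl σ hσ x hx
        exact ⟨ρ, p, rfl, hp, ih _ (rank_fst_lt hx) ρ rfl hρ⟩
    exact this _ h0
  · intro h
    refine closedM (𝕄 := 𝕄) (K := fun x N => ∃ ρ, ρ ∈ N ∧ ∃ p, p ∈ F.P ∧ x = ρ.pair p) dK
      ?_ (IsName F.P) ?_ (v 0) (hv 0) h
    · rintro x N N' hs ⟨ρ, hρ, h⟩
      exact ⟨ρ, hs hρ, h⟩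
    · intro σ hσ hn x hx
      obtain ⟨τ, p, rfl, hp, hτ⟩ := (isName_iff _ _).1 hn x hx
      exact ⟨τ, (mem_M_of_pair_mem hσ hx).1, rank_fst_lt hx, hτ, fun N hN => ⟨τ, hN, p, hp, rfl⟩⟩

/-! ### Generic filters -/

theorem generic_up {G : Set ZFSet.{u}} (hG : IsGeneric 𝕄 F.P F.le G) {p q : ZFSet.{u}} (hp : p ∈ G)
    (h : leP F p q) : q ∈ G := hG.1.2.2.1 p hp q h.2.1 h.2.2

theorem generic_common {G : Set ZFSet.{u}} (hG : IsGeneric 𝕄 F.P F.le G) {p q : ZFSet.{u}}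
    (hp : p ∈ G) (hq : q ∈ G) : ∃ r ∈ G, leP F r p ∧ leP F r q := by
  obtain ⟨r, hr, h1, h2⟩ := hG.1.2.2.2 p hp q hq
  have hs := hG.1.1
  exact ⟨r, hr, ⟨hs hr, hs hp, h1⟩, ⟨hs hr, hs hq, h2⟩⟩

theorem generic_dich {G : Set ZFSet.{u}} (hG : IsGeneric 𝕄 F.P F.le G) {A : ZFSet.{u} → Prop}
    (hA : Dfb 𝕄 (fun v => A (v 0))) :
    (∃ p ∈ G, A p) ∨ ∃ p ∈ G, ∀ q, leP F q p → ¬ A q := by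
  have hd : Dfb 𝕄 (fun v => v 0 ∈ F.P ∧ (A (v 0) ∨ ∀ q, q ∈ F.P → leP F q (v 0) → ¬ A q)) :=
    Dfb.and (Dfb.clsT F.P_cls (DT.var _)) (Dfb.or hA (Dfb.allC F.P_cls (Dfb.imp
      (Dfb.leP (DT.var _) (DT.var _)) (Dfb.not (Dfb.subT (A := fun x _ => A x) (DT.var 0) hA)))))
  obtain ⟨p, hpG, _, hpP, hp⟩ := hG.2 _
    (Dfb.toCls (A := fun x => x ∈ F.P ∧ (A x ∨ ∀ q, q ∈ F.P → leP F q x → ¬ A q)) hd) (by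
      refine ⟨fun x hx => hx.2.1, fun p hp => ?_⟩
      by_cases h : ∃ q, q ∈ F.P ∧ leP F q p ∧ A q
      · obtain ⟨q, hq, hqp, hA⟩ := h
        exact ⟨q, ⟨𝕄.classes_sub _ F.P_cls hq, hq, Or.inl hA⟩, hqp.2.2⟩
      · refine ⟨p, ⟨𝕄.classes_sub _ F.P_cls hp, hp, Or.inr ?_⟩, F.le_refl p hp⟩
        intro q hq hqp hA
        exact h ⟨q, hq, hqp, hA⟩)
  rcases hp with hp | hp
  · exact Or.inl ⟨p, hpG, hp⟩
  · exact Or.inr ⟨p, hpG, fun q hq => hp q hq.1 hq⟩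

theorem generic_below {G : Set ZFSet.{u}} (hG : IsGeneric 𝕄 F.P F.le G) {A : ZFSet.{u} → Prop}
    (hA : Dfb 𝕄 (fun v => A (v 0))) {p : ZFSet.{u}} (hp : p ∈ G)
    (hd : ∀ q, leP F q p → ∃ r, leP F r q ∧ A r) : ∃ r ∈ G, A r := by
  rcases generic_dich hG hA with h | ⟨p', hp', h⟩
  · exact h
  · obtain ⟨q, hq, h1, h2⟩ := generic_common hG hp hp'
    obtain ⟨r, hr, hAr⟩ := hd q h1
    exact absurd hAr (h r (hr.trans h2))

theorem exists_generic {p : ZFSet.{u}} (hp : p ∈ F.P) :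
    ∃ G, IsGeneric 𝕄 F.P F.le G ∧ p ∈ G := by
  have hne : 𝕄.Cls.Nonempty := ⟨_, F.P_cls⟩
  obtain ⟨D, hD⟩ := 𝕄.countable_Cls.exists_eq_range hne
  -- one step
  have step : ∀ n (x : F.P), ∃ y : F.P, F.le y x ∧ (DenseIn F.P F.le (D n) → (y : ZFSet.{u}) ∈ D n) := by
    intro n x
    by_cases h : DenseIn F.P F.le (D n)
    · obtain ⟨q, hq, hle⟩ := h.2 x x.2
      exact ⟨⟨q, h.1 hq⟩, hle, fun _ => hq⟩
    · exact ⟨x, F.le_refl _ x.2, fun h' => absurd h' h⟩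
  choose nx hnx using step
  obtain ⟨s, hs0, hs⟩ : ∃ s : ℕ → F.P, s 0 = ⟨p, hp⟩ ∧ ∀ n, s (n + 1) = nx n (s n) :=
    ⟨fun n => Nat.rec ⟨p, hp⟩ (fun k x => nx k x) n, rfl, fun n => rfl⟩
  have hp0 : F.le (s 0).1 p := by rw [hs0]; exact F.le_refl p hp
  have hanti : ∀ n k : ℕ, F.le (s (n + k)).1 (s n).1 := by
    intro n k
    induction k with
    | zero => exact F.le_refl _ (s n).2
    | succ k ih =>
      have : F.le (s (n + k + 1)).1 (s (n + k)).1 := by rw [hs]; exact (hnx _ _).1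
      exact F.le_trans _ _ _ this ih
  refine ⟨{q | q ∈ F.P ∧ ∃ n : ℕ, F.le (s n).1 q}, ⟨⟨fun q hq => hq.1, ⟨p, hp, 0, hp0⟩, ?_, ?_⟩,
    ?_⟩, hp, 0, hp0⟩
  · rintro q ⟨_, n, hn⟩ r hr hle
    exact ⟨hr, n, F.le_trans _ _ _ hn hle⟩
  · rintro q ⟨hq, n, hn⟩ r ⟨hr, k, hk⟩
    refine ⟨s (n + k), ⟨(s _).2, _, F.le_refl _ (s _).2⟩, F.le_trans _ _ _ (hanti n k) hn, ?_⟩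
    rw [add_comm n k]
    exact F.le_trans _ _ _ (hanti k n) hk
  · intro C hC hdense
    rw [hD] at hC
    obtain ⟨n, rfl⟩ := hC
    have h1 : (s (n + 1) : ZFSet.{u}) ∈ D n := by rw [hs]; exact (hnx _ _).2 hdense
    exact ⟨s (n + 1), ⟨(s _).2, n + 1, F.le_refl _ (s (n + 1)).2⟩, h1⟩

/-! ### The truth lemma for equality -/

theorem truth_eq (hE : Dfb 𝕄 (fun v => ER F F.P (v 0) (v 1) (v 2)))
    {G : Set ZFSet.{u}} (hG : IsGeneric 𝕄 F.P F.le G) :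
    ∀ σ, σ ∈ 𝕄.M → IsName F.P σ → ∀ τ, τ ∈ 𝕄.M → IsName F.P τ →
      (nameEval G σ = nameEval G τ ↔ ∃ p ∈ G, ER F F.P p σ τ) := by
  have hET : ∀ {t s r : (ℕ → ZFSet.{u}) → ZFSet.{u}}, DT 𝕄 t → DT 𝕄 s → DT 𝕄 r →
      Dfb 𝕄 (fun v => ER F F.P (t v) (s v) (r v)) := fun ht hs hr =>
    Dfb.subT3 (A := ER F F.P) ht hs hr hE
  have hGP := hG.1.1
  intro σ
  induction hr : σ.rank using WellFoundedLT.induction generalizing σ with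
  | ind r ih =>
    subst hr
    intro hσ nσ τ hτ nτ
    have ih' : ∀ ρ a, ρ.pair a ∈ σ → ∀ ρ' b, ρ'.pair b ∈ τ →
        (nameEval G ρ = nameEval G ρ' ↔ ∃ p ∈ G, ER F F.P p ρ ρ') := fun ρ a hρ ρ' b hb =>
      ih _ (rank_fst_lt hρ) ρ rfl (mem_M_of_pair_mem hσ hρ).1 (isName_sub nσ hρ).1
        ρ' (mem_M_of_pair_mem hτ hb).1 (isName_sub nτ hb).1
    constructor
    · intro heq
      let N1 : ZFSet.{u} → Prop := fun p => ∃ ρ a, ρ.pair a ∈ σ ∧ leP F p a ∧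
        ∀ r, r ∈ F.P → leP F r p → ∀ ρ' b, ρ'.pair b ∈ τ → leP F r b → ¬ ER F F.P r ρ ρ'
      let N2 : ZFSet.{u} → Prop := fun p => ∃ ρ' b, ρ'.pair b ∈ τ ∧ leP F p b ∧
        ∀ r, r ∈ F.P → leP F r p → ∀ ρ a, ρ.pair a ∈ σ → leP F r a → ¬ ER F F.P r ρ ρ'
      have d1 : Dfb 𝕄 (fun v => N1 (v 0)) :=
        Dfb.exP (DT.const hσ) (Dfb.and (Dfb.leP (DT.var _) (DT.var _)) (Dfb.allC F.P_cls
          (Dfb.imp (Dfb.leP (DT.var _) (DT.var _)) (Dfb.allP (DT.const hτ) (Dfb.imp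
            (Dfb.leP (DT.var _) (DT.var _)) (Dfb.not (hET (DT.var _) (DT.var _) (DT.var _))))))))
      have d2 : Dfb 𝕄 (fun v => N2 (v 0)) :=
        Dfb.exP (DT.const hτ) (Dfb.and (Dfb.leP (DT.var _) (DT.var _)) (Dfb.allC F.P_cls
          (Dfb.imp (Dfb.leP (DT.var _) (DT.var _)) (Dfb.allP (DT.const hσ) (Dfb.imp
            (Dfb.leP (DT.var _) (DT.var _)) (Dfb.not (hET (DT.var _) (DT.var _) (DT.var _))))))))
      by_contra hno
      rcases generic_dich hG (A := fun p => ER F F.P p σ τ)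
        (hET (DT.var _) (DT.const hσ) (DT.const hτ)) with h | ⟨p, hp, hpn⟩
      · exact hno h
      obtain ⟨q, hq, hN⟩ := generic_below hG (A := fun p => N1 p ∨ N2 p) (d1.or d2) hp (by
        intro q hqp
        have hn := hpn q hqp
        rw [ER_iff] at hn
        by_contra hcon
        push Not at hcon
        refine hn ⟨?_, ?_⟩
        · intro ρ a hρ r hr hrq hra
          by_contra h2
          refine (hcon r hrq).1 ⟨ρ, a, hρ, hra, fun s hs hsr ρ' b hb hsb hE' => h2 ?_⟩
          exact ⟨s, hs, hsr, ρ', b, hb, hsb, hE'⟩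
        · intro ρ a hρ r hr hrq hra
          by_contra h2
          refine (hcon r hrq).2 ⟨ρ, a, hρ, hra, fun s hs hsr ρ' b hb hsb hE' => h2 ?_⟩
          exact ⟨s, hs, hsr, ρ', b, hb, hsb, hE'⟩)
      rcases hN with ⟨ρ, a, hρ, hqa, h⟩ | ⟨ρ', b, hb, hqb, h⟩
      · have h1 : nameEval G ρ ∈ nameEval G σ :=
          (mem_nameEval G σ _).2 ⟨ρ, a, generic_up hG hq hqa, hρ, rfl⟩
        rw [heq, mem_nameEval] at h1
        obtain ⟨ρ', b, hbG, hb, e⟩ := h1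
        obtain ⟨s, hs, hE'⟩ := (ih' ρ a hρ ρ' b hb).1 e.symm
        obtain ⟨s1, hs1, h3, h4⟩ := generic_common hG hs hq
        obtain ⟨s2, hs2, h5, h6⟩ := generic_common hG hs1 hbG
        exact h s2 (hGP hs2) (h5.trans h4) ρ' b hb h6 (ER_mono hE' (h5.trans h3))
      · have h1 : nameEval G ρ' ∈ nameEval G τ :=
          (mem_nameEval G τ _).2 ⟨ρ', b, generic_up hG hq hqb, hb, rfl⟩
        rw [← heq, mem_nameEval] at h1
        obtain ⟨ρ, a, haG, hρ, e⟩ := h1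
        obtain ⟨s, hs, hE'⟩ := (ih' ρ a hρ ρ' b hb).1 e
        obtain ⟨s1, hs1, h3, h4⟩ := generic_common hG hs hq
        obtain ⟨s2, hs2, h5, h6⟩ := generic_common hG hs1 haG
        exact h s2 (hGP hs2) (h5.trans h4) ρ a hρ h6 (ER_mono hE' (h5.trans h3))
    · rintro ⟨p, hp, hE'⟩
      rw [ER_iff] at hE'
      ext x
      constructor
      · intro hx
        obtain ⟨ρ, a, haG, hρ, rfl⟩ := (mem_nameEval G σ x).1 hx
        obtain ⟨q, hq, hqp, hqa⟩ := generic_common hG hp haG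
        have hρM := (mem_M_of_pair_mem hσ hρ).1
        obtain ⟨r, hr, ρ', b, hb, hrb, h⟩ := generic_below hG
          (A := fun r => ∃ ρ' b, ρ'.pair b ∈ τ ∧ leP F r b ∧ ER F F.P r ρ ρ')
          (Dfb.exP (DT.const hτ) (Dfb.and (Dfb.leP (DT.var _) (DT.var _))
            (hET (DT.var _) (DT.const hρM) (DT.var _)))) hq (by
              intro q' hq'
              obtain ⟨r, _, h1, h2⟩ := hE'.1 ρ a hρ q' hq'.1 (hq'.trans hqp) (hq'.trans hqa)
              exact ⟨r, h1, h2⟩)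
        exact (mem_nameEval G τ _).2 ⟨ρ', b, generic_up hG hr hrb, hb,
          ((ih' ρ a hρ ρ' b hb).2 ⟨r, hr, h⟩).symm⟩
      · intro hx
        obtain ⟨ρ', b, hbG, hb, rfl⟩ := (mem_nameEval G τ x).1 hx
        obtain ⟨q, hq, hqp, hqb⟩ := generic_common hG hp hbG
        have hρM := (mem_M_of_pair_mem hτ hb).1
        obtain ⟨r, hr, ρ, a, hρ, hra, h⟩ := generic_below hG
          (A := fun r => ∃ ρ a, ρ.pair a ∈ σ ∧ leP F r a ∧ ER F F.P r ρ ρ')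
          (Dfb.exP (DT.const hσ) (Dfb.and (Dfb.leP (DT.var _) (DT.var _))
            (hET (DT.var _) (DT.var _) (DT.const hρM)))) hq (by
              intro q' hq'
              obtain ⟨r, _, h1, h2⟩ := hE'.2 ρ' b hb q' hq'.1 (hq'.trans hqp) (hq'.trans hqb)
              exact ⟨r, h1, h2⟩)
        exact (mem_nameEval G σ _).2 ⟨ρ, a, generic_up hG hr hra, hρ,
          (ih' ρ a hρ ρ' b hb).2 ⟨r, hr, h⟩⟩

/-! ### The syntactic forcing relation -/

/-- The strong forcing relation defined by recursion on formulas. -/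
def FS (F : ClassForcing 𝕄) : EFormula → ZFSet.{u} → (ℕ → ZFSet.{u}) → Prop
  | .mem i j, p, s => ∀ q, q ∈ F.P → leP F q p → ∃ r, r ∈ F.P ∧ leP F r q ∧
      ∃ ρ b, ρ.pair b ∈ s j ∧ leP F r b ∧ ER F F.P r (s i) ρ
  | .eq i j, p, s => ER F F.P p (s i) (s j)
  | .not φ, p, s => ∀ q, q ∈ F.P → leP F q p → ¬ FS F φ q s
  | .or φ ψ, p, s => ∀ q, q ∈ F.P → leP F q p → ∃ r, r ∈ F.P ∧ leP F r q ∧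
      (FS F φ r s ∨ FS F ψ r s)
  | .ex i φ, p, s => ∀ q, q ∈ F.P → leP F q p → ∃ r, r ∈ F.P ∧ leP F r q ∧
      ∃ σ ∈ 𝕄.M, IsName F.P σ ∧ FS F φ r (Function.update s i σ)

theorem FS_mono (φ : EFormula) {p q : ZFSet.{u}} {s : ℕ → ZFSet.{u}} (h : FS F φ p s)
    (hq : leP F q p) : FS F φ q s := by
  cases φ with
  | mem i j => exact fun r hr hrq => h r hr (hrq.trans hq)
  | eq i j => exact ER_mono h hq
  | not φ => exact fun r hr hrq => h r hr (hrq.trans hq)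
  | or φ ψ => exact fun r hr hrq => h r hr (hrq.trans hq)
  | ex i φ => exact fun r hr hrq => h r hr (hrq.trans hq)

theorem FS_dense (φ : EFormula) {p : ZFSet.{u}} {s : ℕ → ZFSet.{u}}
    (h : ∀ q, q ∈ F.P → leP F q p → ∃ r, r ∈ F.P ∧ leP F r q ∧ FS F φ r s) : FS F φ p s := by
  have key : ∀ B : ZFSet.{u} → Prop, (∀ q, q ∈ F.P → leP F q p → ∃ r, r ∈ F.P ∧ leP F r q ∧
      ∀ q', q' ∈ F.P → leP F q' r → ∃ r', r' ∈ F.P ∧ leP F r' q' ∧ B r') →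
      ∀ q, q ∈ F.P → leP F q p → ∃ r, r ∈ F.P ∧ leP F r q ∧ B r := by
    intro B hB q hq hqp
    obtain ⟨r, hr, hrq, h⟩ := hB q hq hqp
    obtain ⟨r', hr', h1, h2⟩ := h r hr (leP.rfl hr)
    exact ⟨r', hr', h1.trans hrq, h2⟩
  cases φ with
  | mem i j => exact key _ h
  | eq i j => exact ER_dense h
  | not φ =>
    intro q hq hqp hf
    obtain ⟨r, hr, hrq, h'⟩ := h q hq hqp
    exact h' r hr (leP.rfl hr) (FS_mono φ hf hrq)
  | or φ ψ => exact key _ h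
  | ex i φ => exact key _ h

theorem dfb_FS (hE : Dfb 𝕄 (fun v => ER F F.P (v 0) (v 1) (v 2))) (φ : EFormula) :
    Dfb 𝕄 (fun v => FS F φ (v 0) (fun n => v (n + 1))) := by
  have hET : ∀ {t s r : (ℕ → ZFSet.{u}) → ZFSet.{u}}, DT 𝕄 t → DT 𝕄 s → DT 𝕄 r →
      Dfb 𝕄 (fun v => ER F F.P (t v) (s v) (r v)) := fun ht hs hr =>
    Dfb.subT3 (A := ER F F.P) ht hs hr hE
  have key : ∀ {B : ZFSet.{u} → (ℕ → ZFSet.{u}) → Prop},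
      Dfb 𝕄 (fun v => B (v 0) (fun n => v (n + 1))) →
      Dfb 𝕄 (fun v => ∀ q, q ∈ F.P → leP F q (v 0) → ∃ r, r ∈ F.P ∧ leP F r q ∧
        B r (fun n => v (n + 1))) := by
    intro B hB
    refine Dfb.allC F.P_cls (Dfb.imp (Dfb.leP (DT.var _) (DT.var _)) (Dfb.exC F.P_cls (Dfb.and
      (Dfb.leP (DT.var _) (DT.var _)) ?_)))
    exact hB.subst (fun n => if n = 0 then 0 else n + 2)
  induction φ with
  | mem i j =>
    exact key (B := fun r s => ∃ ρ b, ρ.pair b ∈ s j ∧ leP F r b ∧ ER F F.P r (s i) ρ)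
      (Dfb.exP (DT.var _) (Dfb.and (Dfb.leP (DT.var _) (DT.var _))
        (hET (DT.var _) (DT.var _) (DT.var _))))
  | eq i j => exact hET (DT.var _) (DT.var _) (DT.var _)
  | not φ ih =>
    refine Dfb.allC F.P_cls (Dfb.imp (Dfb.leP (DT.var _) (DT.var _)) (Dfb.not ?_))
    exact ih.subst (fun n => if n = 0 then 0 else n + 1)
  | or φ ψ ih1 ih2 =>
    exact key (B := fun r s => CF.FS F φ r s ∨ CF.FS F ψ r s) (ih1.or ih2)
  | ex i φ ih =>
    refine key (B := fun r s => ∃ σ ∈ 𝕄.M, IsName F.P σ ∧ CF.FS F φ r (Function.update s i σ)) ?_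
    refine Dfb.ex (Dfb.and (Dfb.isName (DT.var _)) ?_)
    refine (ih.subst (fun n => if n = 0 then 1 else if n = i + 1 then 0 else n + 1)).congr
      fun v _ => ?_
    have : (fun n => v (if n + 1 = 0 then 1 else if n + 1 = i + 1 then 0 else n + 1 + 1)) =
        Function.update (fun n => v (n + 1 + 1)) i (v 0) := by
      funext n
      by_cases h : n = i
      · subst h; simp
      · simp [h]
    show CF.FS F φ (v 1) (fun n => v (if n + 1 = 0 then 1 else if n + 1 = i + 1 then 0 else n + 1 + 1))
      ↔ CF.FS F φ (v 1) (Function.update (fun n => v (n + 1 + 1)) i (v 0))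
    rw [this]



/-- Simultaneous substitution of definable terms. -/
theorem Dfb.substT {A : (ℕ → ZFSet.{u}) → Prop} (h : Dfb 𝕄 A) :
    ∀ T : ℕ → (ℕ → ZFSet.{u}) → ZFSet.{u}, (∀ n, DT 𝕄 (T n)) →
      Dfb 𝕄 (fun v => A (fun n => T n v)) := by
  induction h with
  | mem i j => exact fun T hT => Dfb.memT (hT i) (hT j)
  | eq i j => exact fun T hT => Dfb.eqT (hT i) (hT j)
  | cls i C hC => exact fun T hT => Dfb.clsT hC (hT i)
  | not _ ih => exact fun T hT => (ih T hT).not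
  | or _ _ ih1 ih2 => exact fun T hT => (ih1 T hT).or (ih2 T hT)
  | @ex A _ ih =>
    intro T hT
    refine Dfb.ex (A := fun x v => A x (fun n => T n v)) ?_
    exact ih (fun n v => Nat.casesOn n (v 0) (fun k => T k (fun n => v (n + 1)))) (fun n => by
      cases n with
      | zero => exact DT.var 0
      | succ k => exact (hT k).shift)
  | congr _ hAB ih =>
    intro T hT
    exact (ih T hT).congr fun v hv => hAB _ fun n => (hT n).mem v hv

/-- Definability with constant parameters. -/
theorem dfb_FSc (hE : Dfb 𝕄 (fun v => ER F F.P (v 0) (v 1) (v 2))) (φ : EFormula)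
    (s : ℕ → ZFSet.{u}) (hs : ∀ n, s n ∈ 𝕄.M) : Dfb 𝕄 (fun v => FS F φ (v 0) s) :=
  (dfb_FS hE φ).substT (fun n v => Nat.casesOn n (v 0) (fun k => s k)) (fun n => by
      cases n with
      | zero => exact DT.var 0
      | succ k => exact DT.const (hs k))

theorem nameEval_update (G : Set ZFSet.{u}) (s : ℕ → ZFSet.{u}) (i : ℕ) (σ : ZFSet.{u}) :
    (fun n => nameEval G (Function.update s i σ n)) =
      Function.update (fun n => nameEval G (s n)) i (nameEval G σ) := by
  funext n
  by_cases h : n = i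
  · subst h; simp
  · simp [h]

/-- The truth lemma for the syntactic forcing relation. -/
theorem truth_FS (hE : Dfb 𝕄 (fun v => ER F F.P (v 0) (v 1) (v 2)))
    {G : Set ZFSet.{u}} (hG : IsGeneric 𝕄 F.P F.le G) (φ : EFormula) :
    ∀ s : ℕ → ZFSet.{u}, (∀ n, s n ∈ 𝕄.M ∧ IsName F.P (s n)) →
      (EFormula.Sat (MGen 𝕄 F.P G) (fun n => nameEval G (s n)) φ ↔ ∃ p ∈ G, FS F φ p s) := by
  have hET : ∀ {t s r : (ℕ → ZFSet.{u}) → ZFSet.{u}}, DT 𝕄 t → DT 𝕄 s → DT 𝕄 r →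
      Dfb 𝕄 (fun v => ER F F.P (t v) (s v) (r v)) := fun ht hs hr =>
    Dfb.subT3 (A := ER F F.P) ht hs hr hE
  have hGP := hG.1.1
  -- a dense existential statement is equivalent to a witness in the generic filter
  have key : ∀ B : ZFSet.{u} → Prop, Dfb 𝕄 (fun v => B (v 0)) →
      (∀ p q, B p → leP F q p → B q) →
      ((∃ p ∈ G, ∀ q, q ∈ F.P → leP F q p → ∃ r, r ∈ F.P ∧ leP F r q ∧ B r) ↔ ∃ p ∈ G, B p) := by
    intro B hB hmono
    constructor
    · rintro ⟨p, hp, h⟩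
      refine generic_below hG hB hp fun q hq => ?_
      obtain ⟨r, _, h1, h2⟩ := h q hq.1 hq
      exact ⟨r, h1, h2⟩
    · rintro ⟨p, hp, h⟩
      exact ⟨p, hp, fun q hq hqp => ⟨q, hq, leP.rfl hq, hmono p q h hqp⟩⟩
  induction φ with
  | mem i j =>
    intro s hs
    have hd : Dfb 𝕄 (fun v => ∃ ρ b, ρ.pair b ∈ s j ∧ leP F (v 0) b ∧ ER F F.P (v 0) (s i) ρ) :=
      Dfb.exP (DT.const (hs j).1) (Dfb.and (Dfb.leP (DT.var _) (DT.var _))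
        (hET (DT.var _) (DT.const (hs i).1) (DT.var _)))
    have := key (fun r => ∃ ρ b, ρ.pair b ∈ s j ∧ leP F r b ∧ ER F F.P r (s i) ρ) hd (by
      rintro p q ⟨ρ, b, h1, h2, h3⟩ hqp
      exact ⟨ρ, b, h1, hqp.trans h2, ER_mono h3 hqp⟩)
    refine Iff.trans ?_ this.symm
    show nameEval G (s i) ∈ nameEval G (s j) ↔ _
    rw [mem_nameEval]
    constructor
    · rintro ⟨τ, b, hb, hτ, e⟩
      obtain ⟨p, hp, h⟩ := (truth_eq hE hG _ (hs i).1 (hs i).2 τ (mem_M_of_pair_mem (hs j).1 hτ).1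
        (isName_sub (hs j).2 hτ).1).1 e.symm
      obtain ⟨r, hr, h1, h2⟩ := generic_common hG hp hb
      exact ⟨r, hr, τ, b, hτ, h2, ER_mono h h1⟩
    · rintro ⟨p, hp, τ, b, hτ, h2, h⟩
      refine ⟨τ, b, generic_up hG hp h2, hτ, ?_⟩
      exact ((truth_eq hE hG _ (hs i).1 (hs i).2 τ (mem_M_of_pair_mem (hs j).1 hτ).1
        (isName_sub (hs j).2 hτ).1).2 ⟨p, hp, h⟩).symm
  | eq i j =>
    intro s hs
    exact truth_eq hE hG _ (hs i).1 (hs i).2 _ (hs j).1 (hs j).2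
  | not φ ih =>
    intro s hs
    show ¬ EFormula.Sat _ _ φ ↔ _
    rw [ih s hs]
    constructor
    · intro h
      rcases generic_dich hG (A := fun p => FS F φ p s) (dfb_FSc hE φ s fun n => (hs n).1) with h' | ⟨p, hp, h'⟩
      · exact absurd h' h
      · exact ⟨p, hp, fun q _ hq => h' q hq⟩
    · rintro ⟨p, hp, h⟩ ⟨q, hq, h'⟩
      obtain ⟨r, hr, h1, h2⟩ := generic_common hG hp hq
      exact h r (hGP hr) h1 (FS_mono φ h' h2)
  | or φ ψ ih1 ih2 =>
    intro s hs
    have := key (fun r => FS F φ r s ∨ FS F ψ r s)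
      ((dfb_FSc hE φ s fun n => (hs n).1).or (dfb_FSc hE ψ s fun n => (hs n).1)) (by
        rintro p q (h | h) hqp
        · exact Or.inl (FS_mono φ h hqp)
        · exact Or.inr (FS_mono ψ h hqp))
    refine Iff.trans ?_ this.symm
    show EFormula.Sat _ _ φ ∨ EFormula.Sat _ _ ψ ↔ _
    rw [ih1 s hs, ih2 s hs]
    constructor
    · rintro (⟨p, hp, h⟩ | ⟨p, hp, h⟩)
      · exact ⟨p, hp, Or.inl h⟩
      · exact ⟨p, hp, Or.inr h⟩
    · rintro ⟨p, hp, h | h⟩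
      · exact Or.inl ⟨p, hp, h⟩
      · exact Or.inr ⟨p, hp, h⟩
  | ex i φ ih =>
    intro s hs
    have hd : Dfb 𝕄 (fun v => ∃ σ ∈ 𝕄.M, IsName F.P σ ∧ FS F φ (v 0) (Function.update s i σ)) := by
      refine Dfb.ex (A := fun σ v => IsName F.P σ ∧ FS F φ (v 0) (Function.update s i σ))
        (Dfb.and (Dfb.isName (DT.var 0)) ?_)
      refine ((dfb_FS hE φ).substT (fun n v => Nat.casesOn n (v 1)
        (fun k => Function.update s i (v 0) k)) (fun n => ?_))
      cases n with
      | zero => exact DT.var 1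
      | succ k =>
        by_cases hk : k = i
        · subst hk; simpa using DT.var 0
        · simpa [hk] using DT.const (hs k).1
    have := key (fun r => ∃ σ ∈ 𝕄.M, IsName F.P σ ∧ FS F φ r (Function.update s i σ)) hd (by
      rintro p q ⟨σ, h1, h2, h3⟩ hqp
      exact ⟨σ, h1, h2, FS_mono φ h3 hqp⟩)
    refine Iff.trans ?_ this.symm
    have hup : ∀ σ, σ ∈ 𝕄.M → IsName F.P σ → ∀ n, Function.update s i σ n ∈ 𝕄.M ∧
        IsName F.P (Function.update s i σ n) := by
      intro σ h1 h2 n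
      by_cases h : n = i
      · subst h; simpa using ⟨h1, h2⟩
      · simpa [h] using hs n
    show (∃ x ∈ MGen 𝕄 F.P G, EFormula.Sat _ (Function.update _ i x) φ) ↔ _
    constructor
    · rintro ⟨x, ⟨σ, h1, h2, rfl⟩, h⟩
      rw [← nameEval_update, ih _ (hup σ h1 h2)] at h
      obtain ⟨p, hp, h⟩ := h
      exact ⟨p, hp, σ, h1, h2, h⟩
    · rintro ⟨p, hp, σ, h1, h2, h⟩
      refine ⟨_, ⟨σ, h1, h2, rfl⟩, ?_⟩
      rw [← nameEval_update, ih _ (hup σ h1 h2)]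
      exact ⟨p, hp, h⟩

/-- Extension of a finite sequence of names by the empty name. -/
def extN (m : ℕ) (σs : Fin m → ZFSet.{u}) : ℕ → ZFSet.{u} :=
  fun n => if h : n < m then σs ⟨n, h⟩ else ∅

theorem namesAssign_eq (G : Set ZFSet.{u}) (m : ℕ) (σs : Fin m → ZFSet.{u}) :
    namesAssign G m σs = fun n => nameEval G (extN m σs n) := by
  funext n
  unfold namesAssign extN
  by_cases h : n < m
  · simp [h]
  · simp [h, nameEval_empty]

theorem extN_names {m : ℕ} {σs : Fin m → ZFSet.{u}} (h : ∀ i, σs i ∈ 𝕄.M ∧ IsName F.P (σs i)) :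
    ∀ n, extN m σs n ∈ 𝕄.M ∧ IsName F.P (extN m σs n) := by
  intro n
  unfold extN
  by_cases hn : n < m
  · simpa [hn] using h ⟨n, hn⟩
  · simpa [hn] using ⟨𝕄.empty_mem, isName_empty F.P⟩

theorem forces_iff (hE : Dfb 𝕄 (fun v => ER F F.P (v 0) (v 1) (v 2))) (φ : EFormula) (m : ℕ)
    {σs : Fin m → ZFSet.{u}} (hσ : ∀ i, σs i ∈ 𝕄.M ∧ IsName F.P (σs i)) {p : ZFSet.{u}}
    (hp : p ∈ F.P) : Forces 𝕄 F φ m p σs ↔ FS F φ p (extN m σs) := by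
  constructor
  · intro h
    apply FS_dense
    intro q hq hqp
    obtain ⟨G, hG, hqG⟩ := exists_generic hq
    have h1 := h G hG (generic_up hG hqG hqp)
    rw [namesAssign_eq, truth_FS hE hG φ _ (extN_names hσ)] at h1
    obtain ⟨r, hr, h2⟩ := h1
    obtain ⟨r', hr', h3, h4⟩ := generic_common hG hqG hr
    exact ⟨r', h3.1, h3, FS_mono φ h2 h4⟩
  · intro h G hG hpG
    rw [namesAssign_eq, truth_FS hE hG φ _ (extN_names hσ)]
    exact ⟨p, hpG, h⟩

/-- Prepend a finite sequence to an assignment. -/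
def appN (m : ℕ) (σs : Fin m → ZFSet.{u}) (v : ℕ → ZFSet.{u}) : ℕ → ZFSet.{u} :=
  fun n => if h : n < m then σs ⟨n, h⟩ else v (n - m)

theorem Dfb.exFin (m : ℕ) : ∀ {A : (ℕ → ZFSet.{u}) → Prop}, Dfb 𝕄 A →
    Dfb 𝕄 (fun v => ∃ σs : Fin m → ZFSet.{u}, (∀ i, σs i ∈ 𝕄.M) ∧ A (appN m σs v)) := by
  induction m with
  | zero =>
    intro A hA
    refine hA.congr fun v _ => ?_
    have : ∀ σs : Fin 0 → ZFSet.{u}, appN 0 σs v = v := fun σs => by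
      funext n; simp [appN]
    simp [this]
  | succ m ih =>
    intro A hA
    refine (Dfb.ex (A := fun x v => ∃ σs : Fin m → ZFSet.{u}, (∀ i, σs i ∈ 𝕄.M) ∧
      A (appN m σs (fun n => Nat.casesOn n x v))) ?_).congr fun v _ => ?_
    · refine (ih hA).congr fun v _ => ?_
      have : (fun n => Nat.casesOn n (v 0) (fun n => v (n + 1)) : ℕ → ZFSet.{u}) = v := by
        funext n; cases n <;> rfl
      rw [this]
    · have key : ∀ (σs : Fin (m + 1) → ZFSet.{u}),
          appN m (fun i => σs i.castSucc) (fun n => Nat.casesOn n (σs (Fin.last m)) v) =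
            appN (m + 1) σs v := by
        intro σs
        funext n
        unfold appN
        rcases lt_trichotomy n m with h | h | h
        · have h' : n < m + 1 := by omega
          simp [h, h']
        · subst h; simp [Fin.last]
        · have h1 : ¬ n < m := by omega
          have h2 : ¬ n < m + 1 := by omega
          obtain ⟨k, rfl⟩ : ∃ k, n = m + 1 + k := ⟨n - (m + 1), by omega⟩
          have h3 : m + 1 + k - m = k + 1 := by omega
          simp only [dif_neg h1, dif_neg h2, h3, Nat.add_sub_cancel_left]
      constructor
      · rintro ⟨x, hx, σs, hσ, h⟩
        refine ⟨Fin.snoc σs x, ?_, ?_⟩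
        · intro i
          refine Fin.lastCases ?_ (fun j => ?_) i
          · simpa using hx
          · simpa using hσ j
        · rw [← key]
          simpa using h
      · rintro ⟨σs, hσ, h⟩
        refine ⟨σs (Fin.last m), hσ _, fun i => σs i.castSucc, fun i => hσ _, ?_⟩
        show A (appN m _ (fun n => Nat.casesOn n (σs (Fin.last m)) v))
        rw [key]
        exact h

theorem Dfb.allFin : ∀ (m : ℕ) {A : Fin m → (ℕ → ZFSet.{u}) → Prop}, (∀ i, Dfb 𝕄 (A i)) →
    Dfb 𝕄 (fun v => ∀ i, A i v) := by
  intro m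
  induction m with
  | zero =>
    intro A _
    exact (Dfb.eq 0 0).congr fun v _ => by simp
  | succ m ih =>
    intro A hA
    refine ((hA 0).and (ih (A := fun i => A i.succ) fun i => hA _)).congr fun v _ => ?_
    exact (Fin.forall_fin_succ (P := fun i => A i v)).symm

theorem DT.listEnc : ∀ (m : ℕ) {t : Fin m → (ℕ → ZFSet.{u}) → ZFSet.{u}}, (∀ i, DT 𝕄 (t i)) →
    DT 𝕄 (fun v => listEncode (List.ofFn fun i => t i v)) := by
  intro m
  induction m with
  | zero =>
    intro t _
    simpa [listEncode] using DT.const 𝕄.empty_mem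
  | succ m ih =>
    intro t ht
    simpa [listEncode, List.ofFn_succ] using DT.pair (ht 0) (ih (t := fun i => t i.succ) fun i => ht _)

theorem listEnc_mem : ∀ (m : ℕ) (σs : Fin m → ZFSet.{u}), (∀ i, σs i ∈ 𝕄.M) →
    listEncode (List.ofFn σs) ∈ 𝕄.M := by
  intro m σs h
  exact (DT.listEnc m (t := fun i _ => σs i) fun i => DT.const (h i)).mem (fun _ => ∅)
    fun _ => 𝕄.empty_mem

theorem forcing_cls (hE : Dfb 𝕄 (fun v => ER F F.P (v 0) (v 1) (v 2))) (φ : EFormula) (m : ℕ) :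
    {x : ZFSet.{u} | ∃ p ∈ F.P, ∃ σs : Fin m → ZFSet.{u},
        (∀ i, σs i ∈ 𝕄.M ∧ IsName F.P (σs i)) ∧
        Forces 𝕄 F φ m p σs ∧ x = p.pair (listEncode (List.ofFn σs))} ∈ 𝕄.Cls := by
  -- variables: `0, …, m-1` the names, `m` the condition, `m+1` the coded tuple
  have d1 : Dfb 𝕄 (fun w => (∀ i : Fin m, IsName F.P (w i)) ∧
      FS F φ (w m) (extN m fun i => w i) ∧
      w (m + 1) = (w m).pair (listEncode (List.ofFn fun i : Fin m => w i))) := by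
    refine Dfb.and (Dfb.allFin m fun i => Dfb.isName (DT.var _)) (Dfb.and ?_
      (Dfb.eqT (DT.var _) (DT.pair (DT.var _) (DT.listEnc m fun i => DT.var _))))
    refine (dfb_FS hE φ).substT (fun n w => Nat.casesOn n (w m)
      (fun k => extN m (fun i : Fin m => w i) k)) (fun n => ?_)
    cases n with
    | zero => exact DT.var m
    | succ k =>
      by_cases hk : k < m
      · simpa [extN, hk] using DT.var k
      · simpa [extN, hk] using DT.const 𝕄.empty_mem
  have d2 := Dfb.exFin m d1
  have d3 : Dfb 𝕄 (fun v => ∃ p, p ∈ F.P ∧ ∃ σs : Fin m → ZFSet.{u},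
      (∀ i, σs i ∈ 𝕄.M) ∧ (∀ i, IsName F.P (σs i)) ∧ FS F φ p (extN m σs) ∧
        v 0 = p.pair (listEncode (List.ofFn σs))) := by
    refine Dfb.exC (A := fun p v => ∃ σs : Fin m → ZFSet.{u},
      (∀ i, σs i ∈ 𝕄.M) ∧ (∀ i, IsName F.P (σs i)) ∧ FS F φ p (extN m σs) ∧
        v 0 = p.pair (listEncode (List.ofFn σs))) F.P_cls (d2.congr fun v _ => ?_)
    refine exists_congr fun σs => and_congr_right fun _ => ?_
    simp [appN]
  have := Dfb.toCls (A := fun x => ∃ p, p ∈ F.P ∧ ∃ σs : Fin m → ZFSet.{u},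
      (∀ i, σs i ∈ 𝕄.M) ∧ (∀ i, IsName F.P (σs i)) ∧ FS F φ p (extN m σs) ∧
        x = p.pair (listEncode (List.ofFn σs))) d3
  convert this using 1
  ext x
  constructor
  · rintro ⟨p, hp, σs, hσ, hf, rfl⟩
    exact ⟨opair_mem_M (𝕄.classes_sub _ F.P_cls hp) (listEnc_mem m σs fun i => (hσ i).1), p, hp, σs,
      fun i => (hσ i).1, fun i => (hσ i).2, (forces_iff hE φ m hσ hp).1 hf, rfl⟩
  · rintro ⟨_, p, hp, σs, h1, h2, h3, rfl⟩
    have hσ : ∀ i, σs i ∈ 𝕄.M ∧ IsName F.P (σs i) := fun i => ⟨h1 i, h2 i⟩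
    exact ⟨p, hp, σs, hσ, (forces_iff hE φ m hσ hp).2 h3, rfl⟩

theorem approach_main (h : ApproachableByProjections 𝕄 F) : SatisfiesForcingTheorem 𝕄 F := by
  have hE := Dfb.ER0 h
  intro φ m _
  refine ⟨forcing_cls hE φ m, fun σs hσ G hG hs => ?_⟩
  rw [namesAssign_eq, truth_FS hE hG φ _ (extN_names hσ)] at hs
  obtain ⟨p, hp, h'⟩ := hs
  exact ⟨p, hp, (forces_iff hE φ m hσ (hG.1.1 hp)).2 h'⟩

end CFHelpers

/-- If `ℙ` is a notion of class forcing for `𝕄 ⊨ GB⁻` that is approachable by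
projections, then `ℙ` satisfies the forcing theorem over `𝕄`. -/
theorem approachable_implies_forcing_theorem
    (𝕄 : GBModel) (F : ClassForcing 𝕄) (h : ApproachableByProjections 𝕄 F) :
    SatisfiesForcingTheorem 𝕄 F := by
  exact approach_main h

end CF
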